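/- Let 1 < p⃗ < ∞, 0 < q ≤ ∞, 1 < v < ∞, and 0 ≤ λ < 1/p_1+⋯+1/p_n. Then for every sequence (f_j)_{j=1}^∞ of measurable functions on ℝ^n one has the vector-valued maximal inequality on local mixed Morrey spaces: ‖(Σ_{j=1}^∞ (Mf_j)^v)^{1/v}‖_{LM^λ_{p⃗,q}} ≤ C‖(Σ_{j=1}^∞ |f_j|^v)^{1/v}‖_{LM^λ_{p⃗,q}}, with C independent of (f_j). -/

import Mathlib

/-!
The proof has three ingredients: a Fefferman–Stein inequality on mixed Lebesgue spaces, a localisation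
of the maximal operator on cubes centred at the origin, and a Hardy-type inequality in the radius.

*Fefferman–Stein.* Work with abstract function norms `ρ` on nonnegative functions (`LatNorm`) and with
the property `HL ρ`: the dyadic maximal operator, acting pointwise on functions with values in the space
of `ρ`, is bounded on `L^s(ρ)` for all `1 < s < ∞`, uniformly over all nested partitions (`Grid`). If
`HL ρ` holds, it holds for the norm `L^t(ρ)` in one extra variable (`HL.ext`): for the exponent `s = t`
this is Fubini's theorem, and the other exponents come from `HLBound.extrapolate`. There, stopping the
averages of `ρ(f)` at height `l` turns the known `L^t` bound into the weak type `(1, 1)` bound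
(`weak_type`); applied on stopping cells of the maximal function it gives a good-λ inequality against the
scalar maximal function of `ρ(f)` (`Grid.good_lambda`), which is integrated using Doob's inequality
(`Grid.doob`). Starting from scalars (`hl_eval`) and adding first the index of the sequence with its
`ℓ^v` norm, then the coordinates one at a time, one obtains `HL` for the norms of `L^p(ℓ^v)`
(`vnorm_spec`).

To pass from dyadic intervals to cubes, the one-third trick (`exists_dix_eq`) places every interval in a
comparable cell of one of two dyadic grids, so the maximal operator over cubes is at most `6 ^ n` times
the iterated one-dimensional dyadic operator (`maximalE_le_iterMax`), which is bounded variable by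
variable (`vnorm_iterMax_le`).

*Localisation.* For `x ∈ Q(0, r)`, cubes containing `x` of half-side at most `r / 2` see only the part of
`f` in `Q(0, 2r)`, and the averages over larger ones are bounded by averages over some `Q(0, 2^(k+1) r)`.
A constant on `Q(0, r)` has mixed norm proportional to `(2r)^σ` with `σ = 1/p_1 + ⋯ + 1/p_n`, so comparing
with the cube `Q(0, 2^(k+1) r)`, on which the average is at most the maximal function, gains a factor
`2^(-kσ)`. Writing `N(r)` for the norm of `f` on `Q(0, r)`, the norm of `M f` on `Q(0, r)` is thus at most
a constant times `∑ k, 2^(-kσ) N(2^(k+1) r)` (`vnorm_local`).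

*The radius.* Multiplying by `r^(-λ)` leaves the factors `2^(-k(σ - λ))`, which decay since `λ < σ`. As
`dr/r` is dilation invariant, summing over `k` gives the bound in `L^q(dr/r)` for every `0 < q ≤ ∞`
(`morreyScale_le`).
-/

open MeasureTheory ENNReal NNReal Set Filter

noncomputable section

namespace LMM

/-- `L^p` "norm" (with the usual `essSup` convention for `p = ∞`)
of an `ℝ≥0∞`-valued function on `ℝ` with respect to a measure `μ`. -/
def lpNormE (p : ℝ≥0∞) (g : ℝ → ℝ≥0∞) (μ : Measure ℝ) : ℝ≥0∞ :=
  if p = ∞ then essSup g μ else (∫⁻ t, g t ^ p.toReal ∂μ) ^ (1 / p.toReal)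

/-- Iterated mixed Lebesgue norm of an `ℝ≥0∞`-valued function on `ℝ^n`:
the innermost integration is in the variable `x 1` with exponent `p 1`,
the outermost in `x n` with exponent `p n`. -/
def mixedNorm : (n : ℕ) → (Fin n → ℝ≥0∞) → ((Fin n → ℝ) → ℝ≥0∞) → ℝ≥0∞
  | 0, _, g => g finZeroElim
  | (n + 1), p, g =>
      lpNormE (p (Fin.last n))
        (fun t => mixedNorm n (fun i => p i.castSucc) (fun x => g (Fin.snoc x t)))
        volume

/-- Mixed Lebesgue norm of `g` restricted to a set `S`. -/
def mixedNormOn (n : ℕ) (p : Fin n → ℝ≥0∞) (g : (Fin n → ℝ) → ℝ≥0∞)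
    (S : Set (Fin n → ℝ)) : ℝ≥0∞ :=
  mixedNorm n p (S.indicator g)

/-- The (closed) cube centered at `c` with side length `2 * r`. -/
def cubeAt {n : ℕ} (c : Fin n → ℝ) (r : ℝ) : Set (Fin n → ℝ) := {x | ∀ i, |x i - c i| ≤ r}

/-- The cube `Q(0, r)` centered at the origin with side length `2 * r`. -/
def cube0 (n : ℕ) (r : ℝ) : Set (Fin n → ℝ) := cubeAt 0 r

/-- Euclidean norm on `Fin n → ℝ`. -/
def euclNorm {n : ℕ} (x : Fin n → ℝ) : ℝ := Real.sqrt (∑ i, x i ^ 2)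

/-- The closed Euclidean ball of radius `r` centered at the origin. -/
def closedBall0 (n : ℕ) (r : ℝ) : Set (Fin n → ℝ) := {x | euclNorm x ≤ r}

/-- The local mixed Morrey-type quasi-norm `‖·‖_{LM_{p θ, w}}` of an
`ℝ≥0∞`-valued function. -/
def LMnormE (n : ℕ) (p : Fin n → ℝ≥0∞) (θ : ℝ≥0∞) (w : ℝ → ℝ)
    (g : (Fin n → ℝ) → ℝ≥0∞) : ℝ≥0∞ :=
  lpNormE θ (fun r => ENNReal.ofReal (w r) * mixedNormOn n p g (cube0 n r))
    (volume.restrict (Ioi (0 : ℝ)))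

/-- The local mixed Morrey-type quasi-norm of a real-valued function. -/
def LMnorm (n : ℕ) (p : Fin n → ℝ≥0∞) (θ : ℝ≥0∞) (w : ℝ → ℝ)
    (f : (Fin n → ℝ) → ℝ) : ℝ≥0∞ :=
  LMnormE n p θ w (fun x => (‖f x‖₊ : ℝ≥0∞))

/-- `1/p₁ + ⋯ + 1/pₙ`. -/
def sumInv {n : ℕ} (p : Fin n → ℝ≥0∞) : ℝ := ∑ i, ((p i)⁻¹).toReal

/-- Hardy–Littlewood maximal operator (over cubes) of an `ℝ≥0∞`-valued function. -/
def maximalE {n : ℕ} (g : (Fin n → ℝ) → ℝ≥0∞) (x : Fin n → ℝ) : ℝ≥0∞ :=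
  ⨆ (c : Fin n → ℝ) (r : ℝ) (_ : 0 < r) (_ : x ∈ cubeAt c r),
    (volume (cubeAt c r))⁻¹ * ∫⁻ y in cubeAt c r, g y

/-- Hardy–Littlewood maximal operator of a real-valued function. -/
def maximal {n : ℕ} (f : (Fin n → ℝ) → ℝ) : (Fin n → ℝ) → ℝ≥0∞ :=
  maximalE (fun y => (‖f y‖₊ : ℝ≥0∞))

/-- Weighted `L^θ` norm `‖v · g‖_{L^θ(0,∞)}` of an `ℝ≥0∞`-valued function. -/
def wLpE (θ : ℝ≥0∞) (v : ℝ → ℝ) (g : ℝ → ℝ≥0∞) : ℝ≥0∞ :=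
  lpNormE θ (fun r => ENNReal.ofReal (v r) * g r) (volume.restrict (Ioi (0 : ℝ)))

/-- The dual Hardy operator `H* g (r) = ∫_r^∞ g`. -/
def dualHardyE (g : ℝ → ℝ≥0∞) (r : ℝ) : ℝ≥0∞ := ∫⁻ t in Ioi r, g t

/-- The Hardy operator `H g (r) = ∫_0^r g`. -/
def hardyE (g : ℝ → ℝ≥0∞) (r : ℝ) : ℝ≥0∞ := ∫⁻ t in Ioo 0 r, g t

/-- The weight `v̂₁(r) = r^{-(1/p₁+⋯+1/pₙ)-1} w(r)`. -/
def vhat1 {n : ℕ} (p : Fin n → ℝ≥0∞) (w : ℝ → ℝ) (r : ℝ) : ℝ :=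
  r ^ (-(sumInv p) - 1) * w r

/-- The weight `v̂₂(r) = r^{-(1/p₁+⋯+1/pₙ)} w(r)`. -/
def vhat2 {n : ℕ} (p : Fin n → ℝ≥0∞) (w : ℝ → ℝ) (r : ℝ) : ℝ :=
  r ^ (-(sumInv p)) * w r

/-- Boundedness of the dual Hardy operator `H*` from `L_{θ,v₁}(0,∞)` to `L_{θ,v₂}(0,∞)`. -/
def DualHardyBounded (θ : ℝ≥0∞) (v1 v2 : ℝ → ℝ) : Prop :=
  ∃ C : ℝ≥0, ∀ g : ℝ → ℝ≥0∞, Measurable g → wLpE θ v2 (dualHardyE g) ≤ C * wLpE θ v1 g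

/-- Boundedness of the Hardy operator `H` from `L_{θ,v₁}(0,∞)` to `L_{θ,v₂}(0,∞)`. -/
def HardyBounded (θ : ℝ≥0∞) (v1 v2 : ℝ → ℝ) : Prop :=
  ∃ C : ℝ≥0, ∀ g : ℝ → ℝ≥0∞, Measurable g → wLpE θ v2 (hardyE g) ≤ C * wLpE θ v1 g

/-- The class `Ω_θ`. -/
def OmegaTheta (θ : ℝ≥0∞) (w : ℝ → ℝ) : Prop :=
  Measurable w ∧ (∀ r, 0 ≤ w r) ∧
    ¬ (∀ᵐ r ∂(volume.restrict (Ioi (0 : ℝ))), w r = 0) ∧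
    ∃ t > (0 : ℝ), lpNormE θ (fun r => ENNReal.ofReal (w r)) (volume.restrict (Ioi t)) < ∞

/-- The class `Ω_{p,θ}`. -/
def OmegaPTheta {n : ℕ} (p : Fin n → ℝ≥0∞) (θ : ℝ≥0∞) (w : ℝ → ℝ) : Prop :=
  Measurable w ∧ (∀ r, 0 ≤ w r) ∧
    ¬ (∀ᵐ r ∂(volume.restrict (Ioi (0 : ℝ))), w r = 0) ∧
    (∃ t > (0 : ℝ), lpNormE θ (fun r => ENNReal.ofReal (w r)) (volume.restrict (Ioi t)) < ∞) ∧
    (∃ t > (0 : ℝ), lpNormE θ (fun r => ENNReal.ofReal (w r * r ^ sumInv p))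
        (volume.restrict (Ioo (0 : ℝ) t)) < ∞)

/-- The doubling condition `C⁻¹ w(r) ≤ w(2r) ≤ C w(r)` for all `r > 0`. -/
def Doubling (w : ℝ → ℝ) : Prop :=
  ∃ C : ℝ, 0 < C ∧ ∀ r > (0 : ℝ), C⁻¹ * w r ≤ w (2 * r) ∧ w (2 * r) ≤ C * w r

/-- Conjugate exponent in `ℝ≥0∞`. -/
def conjE (p : ℝ≥0∞) : ℝ≥0∞ := (1 - p⁻¹)⁻¹

/-- `A` is a `(p', w, R)`-block: supported in `Q(0,R)` with `‖A‖_{L^{p'}} ≤ w(R)`. -/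
def IsBlock {n : ℕ} (p' : Fin n → ℝ≥0∞) (w : ℝ → ℝ) (R : ℝ)
    (A : (Fin n → ℝ) → ℝ) : Prop :=
  Measurable A ∧ (∀ x ∉ cube0 n R, A x = 0) ∧
    mixedNorm n p' (fun x => (‖A x‖₊ : ℝ≥0∞)) ≤ ENNReal.ofReal (w R)

/-- `ℓ^q` norm of a `ℤ`-indexed real sequence. -/
def ellNorm (q : ℝ≥0∞) (a : ℤ → ℝ) : ℝ≥0∞ :=
  if q = ∞ then ⨆ j, (‖a j‖₊ : ℝ≥0∞)
  else (∑' j, (‖a j‖₊ : ℝ≥0∞) ^ q.toReal) ^ (1 / q.toReal)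

/-- Membership in the local block space `LH_{p' θ', w}`. -/
def MemLH {n : ℕ} (p' : Fin n → ℝ≥0∞) (θ' : ℝ≥0∞) (w : ℝ → ℝ)
    (g : (Fin n → ℝ) → ℝ) : Prop :=
  ∃ (lam : ℤ → ℝ) (A : ℤ → (Fin n → ℝ) → ℝ),
    (∀ j, IsBlock p' w ((2 : ℝ) ^ j) (A j)) ∧
    (∀ᵐ x, HasSum (fun j => lam j * A j x) (g x)) ∧ ellNorm θ' lam < ∞

/-- The local block space norm `‖g‖_{LH_{p' θ', w}}`. -/
def LHnorm {n : ℕ} (p' : Fin n → ℝ≥0∞) (θ' : ℝ≥0∞) (w : ℝ → ℝ)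
    (g : (Fin n → ℝ) → ℝ) : ℝ≥0∞ :=
  ⨅ (lam : ℤ → ℝ) (A : ℤ → (Fin n → ℝ) → ℝ)
    (_ : (∀ j, IsBlock p' w ((2 : ℝ) ^ j) (A j)) ∧
         ∀ᵐ x, HasSum (fun j => lam j * A j x) (g x)),
    ellNorm θ' lam

/-- `(∫_0^∞ (r^{-λ} A(r))^q dr/r)^{1/q}` (essential supremum when `q = ∞`). -/
def morreyScale (q : ℝ≥0∞) (lam : ℝ) (A : ℝ → ℝ≥0∞) : ℝ≥0∞ :=
  if q = ∞ then essSup (fun r => ENNReal.ofReal (r ^ (-lam)) * A r) (volume.restrict (Ioi (0 : ℝ)))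
  else (∫⁻ r in Ioi (0 : ℝ),
      (ENNReal.ofReal (r ^ (-lam)) * A r) ^ q.toReal * ENNReal.ofReal r⁻¹) ^ (1 / q.toReal)

/-- The local mixed Morrey norm `‖·‖_{LM^λ_{p,q}}` (cubes `Q(0,r)`). -/
def LMlamQ (n : ℕ) (p : Fin n → ℝ≥0∞) (q : ℝ≥0∞) (lam : ℝ)
    (g : (Fin n → ℝ) → ℝ≥0∞) : ℝ≥0∞ :=
  morreyScale q lam (fun r => mixedNormOn n p g (cube0 n r))

/-- The local mixed Morrey norm `‖·‖_{LM^λ_{p,q}}` (balls `B(0,r)`). -/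
def LMlamB (n : ℕ) (p : Fin n → ℝ≥0∞) (q : ℝ≥0∞) (lam : ℝ)
    (g : (Fin n → ℝ) → ℝ≥0∞) : ℝ≥0∞ :=
  morreyScale q lam (fun r => mixedNormOn n p g (closedBall0 n r))

/-- Condition (★) on the auxiliary exponent vector `s`. -/
def StarCond {n : ℕ} (p s : Fin n → ℝ≥0∞) (w : ℝ → ℝ) : Prop :=
  ∃ C : ℝ, ∀ r : ℝ, 0 < r →
    (∫⁻ t in Ioi r,
        ENNReal.ofReal (t ^ (sumInv s / (n : ℝ) - sumInv p / (n : ℝ) - 1) / w (r * t)))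
      ≤ ENNReal.ofReal (C * (r ^ (sumInv p / (n : ℝ) - sumInv s / (n : ℝ)) / w r))

/-- `ℓ^u`-norm (`sup` for `u = ∞`) of an `ℕ`-indexed family in `ℝ≥0∞`. -/
def vecNorm (u : ℝ≥0∞) (a : ℕ → ℝ≥0∞) : ℝ≥0∞ :=
  if u = ∞ then ⨆ j, a j else (∑' j, a j ^ u.toReal) ^ (1 / u.toReal)

/-- Operator norm of the functional `g ↦ ∫ f g` on the local block space. -/
def dualNormOf (n : ℕ) (p : Fin n → ℝ≥0∞) (θ : ℝ≥0∞) (w : ℝ → ℝ)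
    (f : (Fin n → ℝ) → ℝ) : ℝ≥0∞ :=
  ⨆ (g : (Fin n → ℝ) → ℝ) (_ : MemLH (fun i => conjE (p i)) (conjE θ) w g)
    (_ : LHnorm (fun i => conjE (p i)) (conjE θ) w g ≤ 1),
    ENNReal.ofReal |∫ x, f x * g x|

/-- `sup_{t>0} |e^{tΔ}f(x)|` for a (locally integrable) function `f`. -/
def heatSup (n : ℕ) (f : (Fin n → ℝ) → ℝ) (x : Fin n → ℝ) : ℝ≥0∞ :=
  ⨆ (t : ℝ) (_ : 0 < t),
    ENNReal.ofReal
      |∫ y, (4 * Real.pi * t) ^ (-(n : ℝ) / 2) *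
          Real.exp (-(∑ i, (x i - y i) ^ 2) / (4 * t)) * f y|

/-- The Schwartz seminorm `ρ_N`. -/
def rhoN {n : ℕ} (N : ℕ) (φ : SchwartzMap (Fin n → ℝ) ℝ) : ℝ≥0∞ :=
  ∑ k ∈ Finset.range (N + 1),
    ⨆ x : Fin n → ℝ, ENNReal.ofReal ((1 + euclNorm x) ^ N * ‖iteratedFDeriv ℝ k (⇑φ) x‖)

/-- The grand maximal operator of a (locally integrable) function. -/
def grandMaxF {n : ℕ} (N : ℕ) (f : (Fin n → ℝ) → ℝ) (x : Fin n → ℝ) : ℝ≥0∞ :=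
  ⨆ (φ : SchwartzMap (Fin n → ℝ) ℝ) (_ : rhoN N φ ≤ 1) (t : ℝ) (_ : 0 < t),
    ENNReal.ofReal |∫ y, t ^ (-(n : ℝ)) * φ (fun i => (x i - y i) / t) * f y|

/-- The `n`-dimensional Hardy operator `Hf(x) = |x|^{-n} ∫_{|y|<|x|} f(y) dy`. -/
def hardyOp {n : ℕ} (f : (Fin n → ℝ) → ℝ) (x : Fin n → ℝ) : ℝ :=
  (euclNorm x) ^ (-(n : ℝ)) * ∫ y in {y : Fin n → ℝ | euclNorm y < euclNorm x}, f y

end LMM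

open LMM

namespace LMM

/-! ### Lattice norms and Minkowski's inequality -/

section

/-- A function norm on nonnegative functions on `α`: monotone, compatible with measurable parameters,
satisfying Minkowski's integral inequality and the monotone convergence (Fatou) property. Subadditivity,
countable subadditivity and homogeneity are the instances of `mink` for counting measures and for
multiples of a Dirac mass, so they are not separate fields. -/
structure LatNorm {α : Type} [MeasurableSpace α] (ρ : (α → ℝ≥0∞) → ℝ≥0∞) : Prop where
  mono : ∀ f g : α → ℝ≥0∞, f ≤ g → ρ f ≤ ρ g
  meas : ∀ {Z : Type} [MeasurableSpace Z] (f : Z → α → ℝ≥0∞),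
    Measurable (Function.uncurry f) → Measurable fun z => ρ (f z)
  mink : ∀ {Z : Type} [MeasurableSpace Z] (μ : Measure Z) [SFinite μ] (f : Z → α → ℝ≥0∞),
    Measurable (Function.uncurry f) →
      ρ (fun a => ∫⁻ z, f z a ∂μ) ≤ ∫⁻ z, ρ (f z) ∂μ
  iSup_le : ∀ f : ℕ → α → ℝ≥0∞, (∀ n, Measurable (f n)) → Monotone f →
    ρ (fun a => ⨆ n, f n a) ≤ ⨆ n, ρ (f n)

lemma rpow_iSup {ι : Type*} (f : ι → ℝ≥0∞) {t : ℝ} (ht : 0 < t) :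
    (⨆ i, f i) ^ t = ⨆ i, f i ^ t :=
  (ENNReal.orderIsoRpow t ht).map_iSup f

/-- Minkowski's integral inequality with values in `[0, ∞]`. Hölder gives `I ≤ I ^ (1 - 1 / t) * R` for
the `t`-th power integral `I` of a truncation of the inner integral; the truncation makes `I` finite,
so that one may divide, and is removed by Fatou's lemma. -/
lemma lintegral_minkowski {Z Ω : Type*} [MeasurableSpace Z] [MeasurableSpace Ω]
    (μ : Measure Z) [SFinite μ] (ν : Measure Ω) [SigmaFinite ν] {t : ℝ} (ht : 1 < t)
    (h : Z → Ω → ℝ≥0∞) (hm : Measurable (Function.uncurry h)) :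
    (∫⁻ ω, (∫⁻ z, h z ω ∂μ) ^ t ∂ν) ^ (1 / t) ≤ ∫⁻ z, (∫⁻ ω, h z ω ^ t ∂ν) ^ (1 / t) ∂μ := by
  have ht0 : 0 < t := by linarith
  set R := ∫⁻ z, (∫⁻ ω, h z ω ^ t ∂ν) ^ (1 / t) ∂μ with hR
  set N : Ω → ℝ≥0∞ := fun ω => ∫⁻ z, h z ω ∂μ with hN
  have hNm : Measurable N := by
    have := Measurable.lintegral_prod_left' (μ := μ) hm
    exact this
  set Nk : ℕ → Ω → ℝ≥0∞ := fun k => (spanningSets ν k).indicator fun ω => min (N ω) k with hNk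
  have hNkm : ∀ k, Measurable (Nk k) := fun k =>
    (hNm.min measurable_const).indicator (measurableSet_spanningSets ν k)
  have hle : ∀ k ω, Nk k ω ≤ N ω := fun k ω => by
    simp only [hNk]
    exact (indicator_le_self _ _ _).trans (min_le_left _ _)
  have key : ∀ k, ∫⁻ ω, Nk k ω ^ t ∂ν ≤ R ^ t := by
    intro k
    set I := ∫⁻ ω, Nk k ω ^ t ∂ν with hI
    have hIfin : I ≠ ∞ := by
      have : I ≤ ∫⁻ ω in spanningSets ν k, (k : ℝ≥0∞) ^ t ∂ν := by
        rw [← lintegral_indicator (measurableSet_spanningSets ν k)]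
        refine lintegral_mono fun ω => ?_
        by_cases hω : ω ∈ spanningSets ν k
        · simp only [hNk, indicator_of_mem hω]
          exact ENNReal.rpow_le_rpow (min_le_right _ _) ht0.le
        · simp [hNk, indicator_of_notMem hω, ht0]
      refine ne_top_of_le_ne_top ?_ this
      rw [setLIntegral_const]
      exact ENNReal.mul_ne_top (ENNReal.rpow_ne_top_of_nonneg ht0.le (ENNReal.natCast_ne_top k))
        (measure_spanningSets_lt_top ν k).ne
    have h1 : I ≤ I ^ (1 - 1 / t) * R := by
      calc I ≤ ∫⁻ ω, Nk k ω ^ (t - 1) * N ω ∂ν := by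
            refine lintegral_mono fun ω => ?_
            calc Nk k ω ^ t = Nk k ω ^ (t - 1) * Nk k ω := by
                  conv_lhs => rw [show t = (t - 1) + 1 by ring]
                  rw [ENNReal.rpow_add_of_nonneg _ _ (by linarith) zero_le_one, ENNReal.rpow_one]
              _ ≤ _ := by gcongr; exact hle k ω
        _ = ∫⁻ ω, ∫⁻ z, Nk k ω ^ (t - 1) * h z ω ∂μ ∂ν := by
            refine lintegral_congr fun ω => ?_
            rw [lintegral_const_mul]
            exact hm.comp (measurable_id.prodMk measurable_const)
        _ = ∫⁻ z, ∫⁻ ω, Nk k ω ^ (t - 1) * h z ω ∂ν ∂μ := by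
            rw [lintegral_lintegral_swap]
            refine Measurable.aemeasurable ?_
            exact (((hNkm k).comp measurable_fst).pow_const _).mul
              (hm.comp measurable_swap)
        _ ≤ ∫⁻ z, I ^ (1 - 1 / t) * (∫⁻ ω, h z ω ^ t ∂ν) ^ (1 / t) ∂μ := by
            refine lintegral_mono fun z => ?_
            have hc : (t / (t - 1)).HolderConjugate t :=
              (Real.HolderConjugate.conjExponent ht).symm
            refine (ENNReal.lintegral_mul_le_Lp_mul_Lq ν hc
              ((hNkm k).pow_const _).aemeasurable
              (hm.comp (measurable_const.prodMk measurable_id)).aemeasurable).trans ?_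
            have e1 : ∀ ω, (Nk k ω ^ (t - 1)) ^ (t / (t - 1)) = Nk k ω ^ t := fun ω => by
              rw [← ENNReal.rpow_mul]; congr 1
              field_simp [show t - 1 ≠ 0 by linarith]
            have e2 : 1 / (t / (t - 1)) = 1 - 1 / t := by
              field_simp [show t - 1 ≠ 0 by linarith]
            simp only [e1, e2]
            exact le_rfl
        _ = I ^ (1 - 1 / t) * R := by
            rw [lintegral_const_mul]
            refine Measurable.pow_const ?_ _
            exact (hm.pow_const t).lintegral_prod_right'
    rcases eq_or_ne I 0 with h0 | h0
    · rw [h0]; exact zero_le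
    have h2 : I ^ (1 / t) ≤ R := by
      have : I ^ (1 - 1 / t) * I ^ (1 / t) ≤ I ^ (1 - 1 / t) * R := by
        rw [← ENNReal.rpow_add _ _ h0 hIfin]
        simpa using h1
      refine (ENNReal.mul_le_mul_iff_right ?_ ?_).1 this
      · simp [ENNReal.rpow_eq_zero_iff, h0, hIfin]
      · simp [ENNReal.rpow_eq_top_iff, h0, hIfin]
    calc I = (I ^ (1 / t)) ^ t := by
          rw [← ENNReal.rpow_mul]; simp [ht0.ne']
      _ ≤ R ^ t := ENNReal.rpow_le_rpow h2 ht0.le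
  have hlim : ∀ ω, Tendsto (fun k => Nk k ω ^ t) atTop (nhds (N ω ^ t)) := by
    intro ω
    have hmin : Tendsto (fun k : ℕ => min (N ω) (k : ℝ≥0∞)) atTop (nhds (N ω)) := by
      have := (tendsto_const_nhds (x := N ω)).min ENNReal.tendsto_nat_nhds_top
      simpa using this
    refine (ENNReal.continuous_rpow_const.tendsto (N ω)).comp (hmin.congr' ?_)
    filter_upwards [eventually_ge_atTop (spanningSetsIndex ν ω)] with k hk
    have : ω ∈ spanningSets ν k := by
      exact monotone_spanningSets ν hk (mem_spanningSetsIndex ν ω)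
    simp [hNk, indicator_of_mem this]
  have : ∫⁻ ω, N ω ^ t ∂ν ≤ R ^ t := by
    calc ∫⁻ ω, N ω ^ t ∂ν = ∫⁻ ω, liminf (fun k => Nk k ω ^ t) atTop ∂ν :=
          lintegral_congr fun ω => (hlim ω).liminf_eq.symm
      _ ≤ liminf (fun k => ∫⁻ ω, Nk k ω ^ t ∂ν) atTop :=
          lintegral_liminf_le fun k => (hNkm k).pow_const t
      _ ≤ R ^ t := by
          refine (liminf_le_liminf (v := fun _ => R ^ t) (Eventually.of_forall key)).trans ?_
          simp
  calc (∫⁻ ω, N ω ^ t ∂ν) ^ (1 / t) ≤ (R ^ t) ^ (1 / t) :=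
        ENNReal.rpow_le_rpow this (by positivity)
    _ = R := by rw [← ENNReal.rpow_mul]; simp [ht0.ne']

/-- The `L^t(ν)` norm over `ω` of the `ρ`-norms of the slices `a ↦ f (e ω a)`. The map `e` encodes how
`α'` is read as a product of `Ω` and `α`. -/
def extNorm {α α' Ω : Type} [MeasurableSpace Ω] (ρ : (α → ℝ≥0∞) → ℝ≥0∞)
    (ν : Measure Ω) (e : Ω → α → α') (t : ℝ) (f : α' → ℝ≥0∞) : ℝ≥0∞ :=
  (∫⁻ ω, ρ (fun a => f (e ω a)) ^ t ∂ν) ^ (1 / t)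

/-- Lattice norms are stable under taking an `L^t` norm in an extra variable. -/
lemma LatNorm.ext {α α' Ω : Type} [MeasurableSpace α] [MeasurableSpace α'] [MeasurableSpace Ω]
    {ρ : (α → ℝ≥0∞) → ℝ≥0∞} (hρ : LatNorm ρ)
    (ν : Measure Ω) [SigmaFinite ν] {e : Ω → α → α'} (he : Measurable (Function.uncurry e))
    {t : ℝ} (ht : 1 < t) : LatNorm (extNorm ρ ν e t) where
  mono f g hfg := by
    have ht0 : 0 < t := by linarith
    refine ENNReal.rpow_le_rpow (lintegral_mono fun ω => ?_) (by positivity)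
    exact ENNReal.rpow_le_rpow (hρ.mono _ _ fun a => hfg _) ht0.le
  meas {Z} _ f hf := by
    have h1 := hρ.meas (Z := Z × Ω) (fun q a => f q.1 (e q.2 a)) (by
      refine hf.comp ((measurable_fst.comp measurable_fst).prodMk ?_)
      exact he.comp ((measurable_snd.comp measurable_fst).prodMk measurable_snd))
    exact ((h1.pow_const t).lintegral_prod_right' (ν := ν)).pow_const _
  mink {Z} _ μ _ f hf := by
    have ht0 : 0 < t := by linarith
    have h1 := hρ.meas (Z := Z × Ω) (fun q a => f q.1 (e q.2 a)) (by
      refine hf.comp ((measurable_fst.comp measurable_fst).prodMk ?_)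
      exact he.comp ((measurable_snd.comp measurable_fst).prodMk measurable_snd))
    refine le_trans ?_ (lintegral_minkowski μ ν ht (fun z ω => ρ fun a => f z (e ω a)) h1)
    refine ENNReal.rpow_le_rpow (lintegral_mono fun ω => ?_) (by positivity)
    refine ENNReal.rpow_le_rpow ?_ ht0.le
    refine hρ.mink μ (fun z a => f z (e ω a)) ?_
    exact hf.comp (measurable_fst.prodMk (he.comp (measurable_const.prodMk measurable_snd)))
  iSup_le f hf hmono := by
    have ht0 : 0 < t := by linarith
    have hme : ∀ ω, Measurable (e ω) := fun ω => he.comp (measurable_const.prodMk measurable_id)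
    unfold extNorm
    rw [← rpow_iSup _ (by positivity), ← lintegral_iSup]
    · refine ENNReal.rpow_le_rpow (lintegral_mono fun ω => ?_) (by positivity)
      dsimp only
      rw [← rpow_iSup _ ht0]
      refine ENNReal.rpow_le_rpow ?_ ht0.le
      exact hρ.iSup_le (fun n a => f n (e ω a)) (fun n => (hf n).comp (hme ω))
        fun m n hmn a => hmono hmn _
    · intro n
      refine (hρ.meas (fun ω a => f n (e ω a)) ((hf n).comp he)).pow_const _
    · intro m n hmn ω
      exact ENNReal.rpow_le_rpow (hρ.mono _ _ fun a => hmono hmn _) ht0.le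

namespace LatNorm
variable {α : Type} [MeasurableSpace α] {ρ : (α → ℝ≥0∞) → ℝ≥0∞} (hρ : LatNorm ρ)
include hρ

lemma zero : ρ (fun _ => 0) = 0 := by
  have := hρ.mink (0 : Measure Unit) (fun _ _ => 0) measurable_const
  simpa using this

lemma tsum_le (f : ℕ → α → ℝ≥0∞) (hf : ∀ n, Measurable (f n)) :
    ρ (fun a => ∑' n, f n a) ≤ ∑' n, ρ (f n) := by
  have := hρ.mink (Measure.count : Measure ℕ) f (measurable_from_prod_countable_right hf)
  simpa [lintegral_count] using this

lemma add_le (f g : α → ℝ≥0∞) (hf : Measurable f) (hg : Measurable g) :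
    ρ (fun a => f a + g a) ≤ ρ f + ρ g := by
  have := hρ.mink (Measure.count : Measure Bool) (fun b => if b then f else g)
    (measurable_from_prod_countable_right (by simp [hf, hg]))
  simpa [lintegral_count, tsum_bool, add_comm] using this

lemma smul_le (c : ℝ≥0∞) (f : α → ℝ≥0∞) (hf : Measurable f) :
    ρ (fun a => c * f a) ≤ c * ρ f := by
  have := hρ.mink (c • Measure.dirac ()) (fun _ => f) (hf.comp measurable_snd)
  simpa [mul_comm] using this

end LatNorm

end

/-! ### Layer cake and integration of good-λ inequalities -/

section

lemma lintegral_Ioo_rpow {p : ℝ} (hp : 0 < p) {b : ℝ} (hb : 0 ≤ b) :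
    ∫⁻ l in Ioo (0 : ℝ) b, ENNReal.ofReal (p * l ^ (p - 1)) = ENNReal.ofReal (b ^ p) := by
  have hint : IntervalIntegrable (fun l : ℝ => p * l ^ (p - 1)) volume 0 b :=
    (intervalIntegral.intervalIntegrable_rpow' (by linarith)).const_mul p
  rw [intervalIntegrable_iff_integrableOn_Ioo_of_le hb] at hint
  rw [← ofReal_integral_eq_lintegral_ofReal hint]
  · rw [← integral_Ioc_eq_integral_Ioo, ← intervalIntegral.integral_of_le hb,
      intervalIntegral.integral_const_mul, integral_rpow (Or.inl (by linarith))]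
    congr 1
    rw [sub_add_cancel, Real.zero_rpow hp.ne']
    field_simp
    simp
  · refine (ae_restrict_iff' measurableSet_Ioo).2 (Eventually.of_forall fun l hl => ?_)
    have := hl.1
    simp only [Pi.zero_apply]; positivity

lemma rpow_eq_lintegral {p : ℝ} (hp : 0 < p) (a : ℝ≥0∞) :
    a ^ p = ∫⁻ l in Ioi (0 : ℝ), ENNReal.ofReal (p * l ^ (p - 1)) *
      (Ioi (ENNReal.ofReal l)).indicator 1 a := by
  have h0 : ∀ b : ℝ, 0 ≤ b → ENNReal.ofReal b ≤ a → ENNReal.ofReal b ^ p ≤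
      ∫⁻ l in Ioi (0 : ℝ), ENNReal.ofReal (p * l ^ (p - 1)) *
      (Ioi (ENNReal.ofReal l)).indicator 1 a := by
    intro b hb hba
    rw [ENNReal.ofReal_rpow_of_nonneg hb hp.le, ← lintegral_Ioo_rpow hp hb]
    rw [← lintegral_indicator measurableSet_Ioo, ← lintegral_indicator measurableSet_Ioi]
    refine lintegral_mono fun l => ?_
    by_cases hl : l ∈ Ioo 0 b
    · have : ENNReal.ofReal l < a :=
        lt_of_lt_of_le ((ENNReal.ofReal_lt_ofReal_iff_of_nonneg hl.1.le).2 hl.2) hba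
      simp [indicator_of_mem hl, indicator_of_mem (show l ∈ Ioi (0:ℝ) from hl.1), this]
    · simp [indicator_of_notMem hl]
  by_cases ha : a = ∞
  · subst ha
    rw [ENNReal.top_rpow_of_pos hp]
    symm
    rw [eq_top_iff]
    refine ENNReal.le_of_forall_nnreal_lt fun r _ => ?_
    have := h0 ((r : ℝ) ^ (1 / p)) (by positivity) le_top
    rw [ENNReal.ofReal_rpow_of_nonneg (by positivity) hp.le, ← Real.rpow_mul r.coe_nonneg] at this
    simpa [hp.ne'] using this
  · apply le_antisymm
    · have := h0 a.toReal toReal_nonneg (ENNReal.ofReal_toReal ha).le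
      rwa [ENNReal.ofReal_toReal ha] at this
    · conv_rhs => rw [← ENNReal.ofReal_toReal ha,
        ENNReal.ofReal_rpow_of_nonneg toReal_nonneg hp.le, ← lintegral_Ioo_rpow hp toReal_nonneg]
      rw [← lintegral_indicator measurableSet_Ioo, ← lintegral_indicator measurableSet_Ioi]
      refine lintegral_mono fun l => ?_
      by_cases hl : 0 < l
      · by_cases hla : ENNReal.ofReal l < a
        · have : l ∈ Ioo 0 a.toReal := ⟨hl, by
            rwa [ENNReal.ofReal_lt_iff_lt_toReal hl.le ha] at hla⟩
          simp [indicator_of_mem this, hl, hla]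
        · rw [indicator_of_mem (show l ∈ Ioi (0:ℝ) from hl),
            indicator_of_notMem (show a ∉ Ioi (ENNReal.ofReal l) from hla), mul_zero]
          exact zero_le
      · simp [hl]

/-- The layer-cake formula, valid also for functions taking the value `∞` (Mathlib's version is for
real-valued functions). -/
lemma lintegral_rpow_layer {Y : Type*} [MeasurableSpace Y] (μ : Measure Y) [SFinite μ]
    {p : ℝ} (hp : 0 < p) {A : Y → ℝ≥0∞} (hA : Measurable A) :
    ∫⁻ x, A x ^ p ∂μ = ∫⁻ l in Ioi (0 : ℝ), ENNReal.ofReal (p * l ^ (p - 1)) *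
      μ {x | ENNReal.ofReal l < A x} := by
  simp_rw [rpow_eq_lintegral hp]
  have hset : MeasurableSet {q : Y × ℝ | ENNReal.ofReal q.2 < A q.1} :=
    measurableSet_lt (ENNReal.measurable_ofReal.comp measurable_snd) (hA.comp measurable_fst)
  have e : ∀ (x : Y) (l : ℝ), (Ioi (ENNReal.ofReal l)).indicator (1 : ℝ≥0∞ → ℝ≥0∞) (A x) =
      {q : Y × ℝ | ENNReal.ofReal q.2 < A q.1}.indicator 1 (x, l) := fun x l => by
    simp [indicator]
  rw [lintegral_lintegral_swap]
  · refine lintegral_congr fun l => ?_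
    have hm : MeasurableSet {x | ENNReal.ofReal l < A x} := measurableSet_lt measurable_const hA
    rw [← lintegral_indicator_one hm, ← lintegral_const_mul]
    · refine lintegral_congr fun x => ?_
      simp [indicator]
    · exact measurable_one.indicator hm
  · refine Measurable.aemeasurable ?_
    simp only [Function.uncurry_def, e]
    refine Measurable.mul ?_ (measurable_one.indicator hset)
    fun_prop

lemma measurable_tail {Y : Type*} [MeasurableSpace Y] (μ : Measure Y) (A : Y → ℝ≥0∞) :
    Measurable fun l : ℝ => μ {x | ENNReal.ofReal l < A x} := by
  refine Antitone.measurable fun a b hab => measure_mono fun x hx => ?_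
  exact lt_of_le_of_lt (ENNReal.ofReal_le_ofReal hab) hx

lemma le_two_mul_of_le_add_half {I X : ℝ≥0∞} (hI : I ≠ ∞) (h : I ≤ X + 2⁻¹ * I) : I ≤ 2 * X := by
  by_cases hX : X = ∞
  · simp [hX]
  lift I to ℝ≥0 using hI
  lift X to ℝ≥0 using hX
  have h2 : ((2⁻¹ : ℝ≥0) : ℝ≥0∞) = 2⁻¹ := by simp
  rw [← h2] at h
  norm_cast at h ⊢
  rw [← NNReal.coe_le_coe] at h ⊢
  push_cast at h ⊢
  linarith

/-- Integrating a good-`λ` inequality. Truncating `A` at height `R` preserves the hypothesis and, the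
measure being finite, makes the term to be absorbed finite. -/
lemma good_lambda_absorb {Y : Type*} [MeasurableSpace Y] (μ : Measure Y) [IsFiniteMeasure μ]
    {p : ℝ} (hp : 0 < p) {A B : Y → ℝ≥0∞} (hA : Measurable A) (hB : Measurable B)
    {γ : ℝ≥0} (hγ : 0 < γ) {κ : ℝ≥0∞} (hκ : 2 ^ p * κ ≤ 2⁻¹)
    (h : ∀ l : ℝ, 0 < l → μ {x | 2 * ENNReal.ofReal l < A x} ≤
      μ {x | γ * ENNReal.ofReal l < B x} + κ * μ {x | ENNReal.ofReal l < A x}) :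
    ∫⁻ x, A x ^ p ∂μ ≤ 2 * (2 ^ p * (γ⁻¹ : ℝ≥0) ^ p) * ∫⁻ x, B x ^ p ∂μ := by
  have hγ0 : (γ : ℝ≥0∞) ≠ 0 := by simpa using hγ.ne'
  have key : ∀ R : ℕ, ∫⁻ x, min (A x) R ^ p ∂μ ≤
      2 * (2 ^ p * (γ⁻¹ : ℝ≥0) ^ p) * ∫⁻ x, B x ^ p ∂μ := by
    intro R
    set AR : Y → ℝ≥0∞ := fun x => min (A x) R
    have hAR : Measurable AR := hA.min measurable_const
    have hfin : ∫⁻ x, AR x ^ p ∂μ ≠ ∞ := by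
      refine ne_top_of_le_ne_top ?_ (lintegral_mono fun x =>
        ENNReal.rpow_le_rpow (min_le_right (A x) (R : ℝ≥0∞)) hp.le)
      rw [lintegral_const]
      exact ENNReal.mul_ne_top (ENNReal.rpow_ne_top_of_nonneg hp.le (ENNReal.natCast_ne_top R))
        (measure_ne_top _ _)
    have h' : ∀ l : ℝ, 0 < l → μ {x | ENNReal.ofReal l < 2⁻¹ * AR x} ≤
        μ {x | ENNReal.ofReal l < (γ⁻¹ : ℝ≥0) * B x} + κ * μ {x | ENNReal.ofReal l < AR x} := by
      intro l hl
      have e1 : ∀ a : ℝ≥0∞, ENNReal.ofReal l < 2⁻¹ * a ↔ 2 * ENNReal.ofReal l < a := fun a => by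
        rw [mul_comm (2⁻¹ : ℝ≥0∞), ← div_eq_mul_inv, ENNReal.lt_div_iff_mul_lt (by simp) (by simp),
          mul_comm]
      have e2 : ∀ b : ℝ≥0∞, ENNReal.ofReal l < (γ⁻¹ : ℝ≥0) * b ↔
          γ * ENNReal.ofReal l < b := fun b => by
        rw [ENNReal.coe_inv hγ.ne', mul_comm (_⁻¹ : ℝ≥0∞), ← div_eq_mul_inv,
          ENNReal.lt_div_iff_mul_lt (by simp [hγ0]) (by simp), mul_comm]
      simp only [e1, e2]
      by_cases hR : 2 * ENNReal.ofReal l < R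
      · have hR' : ENNReal.ofReal l < R := lt_of_le_of_lt (le_mul_of_one_le_left' one_le_two) hR
        have := h l hl
        simpa [AR, hR, hR'] using this
      · have : {x | 2 * ENNReal.ofReal l < AR x} = ∅ := by
          ext x; simp only [mem_ofPred_eq, mem_empty_iff_false, iff_false, not_lt]
          exact (min_le_right _ _).trans (not_lt.1 hR)
        simp [this]
    have h1 : ∫⁻ x, (2⁻¹ * AR x) ^ p ∂μ ≤
        ∫⁻ x, ((γ⁻¹ : ℝ≥0) * B x) ^ p ∂μ + κ * ∫⁻ x, AR x ^ p ∂μ := by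
      rw [lintegral_rpow_layer μ hp (hAR.const_mul _), lintegral_rpow_layer μ hp (hB.const_mul _),
        lintegral_rpow_layer μ hp hAR, ← lintegral_const_mul, ← lintegral_add_right]
      · refine setLIntegral_mono' measurableSet_Ioi fun l hl => ?_
        calc _ ≤ ENNReal.ofReal (p * l ^ (p - 1)) * (_ + _) := mul_le_mul_right (h' l hl) _
          _ = _ := by ring
      · refine Measurable.const_mul (Measurable.mul (by fun_prop) (measurable_tail _ _)) _
      · exact Measurable.mul (by fun_prop) (measurable_tail _ _)
    simp only [ENNReal.mul_rpow_of_nonneg _ _ hp.le] at h1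
    rw [lintegral_const_mul _ (hAR.pow_const p), lintegral_const_mul _ (hB.pow_const p)] at h1
    have h2 : (2 : ℝ≥0∞) ^ p * 2⁻¹ ^ p = 1 := by
      rw [← ENNReal.mul_rpow_of_nonneg _ _ hp.le, ENNReal.mul_inv_cancel (by simp) (by simp),
        ENNReal.one_rpow]
    have := le_two_mul_of_le_add_half hfin (X := 2 ^ p * (γ⁻¹ : ℝ≥0) ^ p * ∫⁻ x, B x ^ p ∂μ) (by
      calc ∫⁻ x, AR x ^ p ∂μ = 2 ^ p * (2⁻¹ ^ p * ∫⁻ x, AR x ^ p ∂μ) := by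
            rw [← mul_assoc, h2, one_mul]
        _ ≤ 2 ^ p * ((γ⁻¹ : ℝ≥0) ^ p * ∫⁻ x, B x ^ p ∂μ + κ * ∫⁻ x, AR x ^ p ∂μ) :=
            mul_le_mul_right h1 _
        _ = 2 ^ p * (γ⁻¹ : ℝ≥0) ^ p * ∫⁻ x, B x ^ p ∂μ + (2 ^ p * κ) * ∫⁻ x, AR x ^ p ∂μ := by
            ring
        _ ≤ _ := by gcongr)
    simpa [mul_assoc] using this
  have hsup : ∀ x, A x ^ p = ⨆ R : ℕ, min (A x) R ^ p := fun x => by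
    rw [← rpow_iSup _ hp]
    congr 1
    rw [← inf_iSup_eq, ENNReal.iSup_natCast, inf_top_eq]
  simp_rw [hsup]
  rw [lintegral_iSup]
  · exact iSup_le key
  · exact fun R => (hA.min measurable_const).pow_const p
  · intro m n hmn x
    dsimp only
    gcongr

end

/-! ### Nested partitions, averages and Doob's inequality -/

section

/-- A sequence of nested partitions of `Y` into countably many cells, the cells of level `j` being the
fibres of the label `c j`. Larger `j` means finer; each cell has measure at most twice that of any of its
children. -/
structure Grid {Y : Type} [MeasurableSpace Y] (μ : Measure Y) where
  c : ℕ → Y → ℤ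
  meas : ∀ j, Measurable (c j)
  nested : ∀ j x y, c (j + 1) x = c (j + 1) y → c j x = c j y
  doubling : ∀ j x, μ (c j ⁻¹' {c j x}) ≤ 2 * μ (c (j + 1) ⁻¹' {c (j + 1) x})

namespace Grid
variable {Y : Type} [MeasurableSpace Y] {μ : Measure Y} (G : Grid μ)

/-- The cell of level `j` containing `x`. -/
def cell (j : ℕ) (x : Y) : Set Y := G.c j ⁻¹' {G.c j x}

/-- The average of `h` over the cell of level `j` containing `x`. It is `0` on cells of infinite measure;
on null cells it is `0` as well, since the integral vanishes there. -/
def avg (j : ℕ) (h : Y → ℝ≥0∞) (x : Y) : ℝ≥0∞ :=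
  (μ (G.cell j x))⁻¹ * ∫⁻ y in G.cell j x, h y ∂μ

/-- The largest of the averages of level at most `J`. -/
def smax (J : ℕ) (h : Y → ℝ≥0∞) (x : Y) : ℝ≥0∞ := ⨆ (i : ℕ) (_ : i ≤ J), G.avg i h x

/-- The maximal function in the variable of `Y`, taken separately for each value of the parameter `a`. -/
def star {α : Type} (J : ℕ) (f : Y → α → ℝ≥0∞) (x : Y) (a : α) : ℝ≥0∞ :=
  G.smax J (fun y => f y a) x

/-- `S` is a union of cells of level `j`. -/
def Sat (j : ℕ) (S : Set Y) : Prop := ∀ x y, G.c j x = G.c j y → x ∈ S → y ∈ S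

lemma nested_le {i j : ℕ} (hij : i ≤ j) {x y : Y} (h : G.c j x = G.c j y) : G.c i x = G.c i y := by
  induction j, hij using Nat.le_induction with
  | base => exact h
  | succ k _ ih => exact ih (G.nested k x y h)

lemma Sat.mono {i j : ℕ} (hij : i ≤ j) {S : Set Y} (h : G.Sat i S) : G.Sat j S :=
  fun x y hxy => h x y (G.nested_le hij hxy)

lemma mem_cell {j : ℕ} {x y : Y} : y ∈ G.cell j x ↔ G.c j y = G.c j x := Iff.rfl

lemma mem_cell_self (j : ℕ) (x : Y) : x ∈ G.cell j x := rfl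

lemma measurableSet_cell (j : ℕ) (x : Y) : MeasurableSet (G.cell j x) :=
  G.meas j (measurableSet_singleton _)

lemma sat_cell {i j : ℕ} (hij : i ≤ j) (x : Y) : G.Sat j (G.cell i x) := by
  intro y z hyz hy
  rw [mem_cell] at *
  rw [← hy, G.nested_le hij hyz]

lemma cell_congr {j : ℕ} {x y : Y} (h : G.c j x = G.c j y) : G.cell j x = G.cell j y := by
  simp [cell, h]

lemma avg_congr {j : ℕ} {x y : Y} (h : G.c j x = G.c j y) (g : Y → ℝ≥0∞) :
    G.avg j g x = G.avg j g y := by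
  simp [avg, G.cell_congr h]

lemma avg_mono {j : ℕ} {g h : Y → ℝ≥0∞} (hgh : ∀ y, g y ≤ h y) (x : Y) :
    G.avg j g x ≤ G.avg j h x :=
  mul_le_mul_right (lintegral_mono hgh) _

lemma smax_mono {J : ℕ} {g h : Y → ℝ≥0∞} (hgh : ∀ y, g y ≤ h y) (x : Y) :
    G.smax J g x ≤ G.smax J h x :=
  iSup₂_mono fun _ _ => G.avg_mono hgh x

lemma avg_le_smax {i J : ℕ} (hi : i ≤ J) (h : Y → ℝ≥0∞) (x : Y) : G.avg i h x ≤ G.smax J h x :=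
  le_iSup₂ (f := fun i (_ : i ≤ J) => G.avg i h x) i hi

lemma measurable_avg_uncurry {α : Type} [MeasurableSpace α] [SFinite μ] (j : ℕ)
    {f : Y → α → ℝ≥0∞} (hf : Measurable (Function.uncurry f)) :
    Measurable fun q : Y × α => G.avg j (fun y => f y q.2) q.1 := by
  have h1 : ∀ m : ℤ, Measurable fun a => ∫⁻ y in G.c j ⁻¹' {m}, f y a ∂μ := fun m =>
    Measurable.lintegral_prod_left' (f := Function.uncurry f) hf
  have h2 : Measurable fun q : ℤ × α => ∫⁻ y in G.c j ⁻¹' {q.1}, f y q.2 ∂μ :=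
    measurable_from_prod_countable_right h1
  have h3 : Measurable fun m : ℤ => (μ (G.c j ⁻¹' {m}))⁻¹ := measurable_of_countable _
  have hc : Measurable fun q : Y × α => G.c j q.1 := (G.meas j).comp measurable_fst
  exact (h3.comp hc).mul (h2.comp (hc.prodMk measurable_snd))

lemma measurable_smax_uncurry {α : Type} [MeasurableSpace α] [SFinite μ] (J : ℕ)
    {f : Y → α → ℝ≥0∞} (hf : Measurable (Function.uncurry f)) :
    Measurable (Function.uncurry (G.star J f)) := by
  refine Measurable.iSup fun i => Measurable.iSup_Prop _ (G.measurable_avg_uncurry i hf)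

lemma measurable_avg (j : ℕ) (h : Y → ℝ≥0∞) : Measurable (G.avg j h) := by
  have : Measurable fun m : ℤ => (μ (G.c j ⁻¹' {m}))⁻¹ * ∫⁻ y in G.c j ⁻¹' {m}, h y ∂μ :=
    measurable_of_countable _
  exact this.comp (G.meas j)

lemma measurable_smax (J : ℕ) (h : Y → ℝ≥0∞) : Measurable (G.smax J h) :=
  Measurable.iSup fun i => Measurable.iSup_Prop _ (G.measurable_avg i h)

lemma avg_const_le (j : ℕ) (c : ℝ≥0∞) (x : Y) : G.avg j (fun _ => c) x ≤ c := by
  unfold avg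
  rw [setLIntegral_const, mul_comm c, ← mul_assoc]
  exact mul_le_of_le_one_left' (ENNReal.inv_mul_le_one _)

/-- Averaging at level `j` preserves integrals over unions of cells of level `j`. -/
lemma setLIntegral_avg [IsFiniteMeasure μ] {j : ℕ} {S : Set Y} (hSm : MeasurableSet S)
    (hS : G.Sat j S) (h : Y → ℝ≥0∞) : ∫⁻ x in S, G.avg j h x ∂μ = ∫⁻ x in S, h x ∂μ := by
  have hU : S = ⋃ m : ℤ, S ∩ G.c j ⁻¹' {m} := by
    ext x; simp
  have hd : Pairwise (Function.onFun Disjoint fun m : ℤ => S ∩ G.c j ⁻¹' {m}) := by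
    intro m m' hmm
    refine Set.disjoint_left.2 fun x hx hx' => hmm ?_
    rw [← hx.2, ← hx'.2]
  have hm : ∀ m : ℤ, MeasurableSet (S ∩ G.c j ⁻¹' {m}) := fun m =>
    hSm.inter (G.meas j (measurableSet_singleton _))
  rw [hU, lintegral_iUnion hm hd, lintegral_iUnion hm hd]
  refine tsum_congr fun m => ?_
  rcases (S ∩ G.c j ⁻¹' {m}).eq_empty_or_nonempty with he | ⟨x, hxS, hx⟩
  · simp [he]
  have hx : G.c j x = m := hx
  have hQ : S ∩ G.c j ⁻¹' {m} = G.cell j x := by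
    subst hx
    refine inter_eq_right.2 fun y hy => hS x y hy.symm hxS
  rw [hQ, setLIntegral_congr_fun (G.measurableSet_cell j x)
    (g := fun _ => G.avg j h x) (fun y hy => G.avg_congr hy h), setLIntegral_const]
  unfold avg
  by_cases h0 : μ (G.cell j x) = 0
  · rw [setLIntegral_measure_zero _ _ h0, h0, mul_zero]
  · rw [mul_comm, ← mul_assoc, ENNReal.mul_inv_cancel h0 (measure_ne_top _ _), one_mul]

/-- The set of points at which `j` is the first level where `B` exceeds `l`. -/
def stopSet (B : ℕ → Y → ℝ≥0∞) (l : ℝ≥0∞) (j : ℕ) : Set Y := {x | l < B j x ∧ ∀ i < j, B i x ≤ l}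

/-- Each `B j` is measurable and constant on the cells of level `j`. -/
def Adapted (B : ℕ → Y → ℝ≥0∞) : Prop :=
  (∀ j, Measurable (B j)) ∧ ∀ j x y, G.c j x = G.c j y → B j x = B j y

lemma adapted_avg (h : Y → ℝ≥0∞) : G.Adapted fun j => G.avg j h :=
  ⟨fun j => G.measurable_avg j h, fun _ _ _ hxy => G.avg_congr hxy h⟩

lemma sat_stopSet {B : ℕ → Y → ℝ≥0∞} (hB : G.Adapted B) (l : ℝ≥0∞) (j : ℕ) :
    G.Sat j (stopSet B l j) := by
  rintro x y hxy ⟨h1, h2⟩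
  refine ⟨by rwa [← hB.2 j x y hxy], fun i hi => ?_⟩
  rw [← hB.2 i x y (G.nested_le hi.le hxy)]
  exact h2 i hi

lemma measurableSet_stopSet {B : ℕ → Y → ℝ≥0∞} (hB : ∀ j, Measurable (B j)) (l : ℝ≥0∞) (j : ℕ) :
    MeasurableSet (stopSet B l j) := by
  have : stopSet B l j = {x | l < B j x} ∩ ⋂ i, ⋂ (_ : i < j), {x | B i x ≤ l} := by
    ext x; simp [stopSet]
  rw [this]
  exact (measurableSet_lt measurable_const (hB j)).inter
    (MeasurableSet.iInter fun i => MeasurableSet.iInter fun _ =>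
      measurableSet_le (hB i) measurable_const)

lemma stopSet_unique {B : ℕ → Y → ℝ≥0∞} {l : ℝ≥0∞} {i j : ℕ} {x : Y} (hi : x ∈ stopSet B l i)
    (hj : x ∈ stopSet B l j) : i = j := by
  by_contra hne
  rcases lt_or_gt_of_ne hne with h | h
  · exact absurd hi.1 (not_lt.2 (hj.2 i h))
  · exact absurd hj.1 (not_lt.2 (hi.2 j h))

lemma exists_stopSet {B : ℕ → Y → ℝ≥0∞} {l : ℝ≥0∞} {j : ℕ} {x : Y} (h : l < B j x) :
    ∃ i ≤ j, x ∈ stopSet B l i := by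
  classical
  have hex : ∃ i, l < B i x := ⟨j, h⟩
  refine ⟨Nat.find hex, Nat.find_min' hex h, Nat.find_spec hex, fun i hi => ?_⟩
  exact not_lt.1 (Nat.find_min hex hi)

/-- The set of points at which `B` exceeds `l` at some level not larger than `J`. -/
def stopUnion (B : ℕ → Y → ℝ≥0∞) (l : ℝ≥0∞) (J : ℕ) : Set Y :=
  ⋃ j ∈ Finset.range (J + 1), stopSet B l j

lemma measurableSet_stopUnion {B : ℕ → Y → ℝ≥0∞} (hB : ∀ j, Measurable (B j)) (l : ℝ≥0∞) (J : ℕ) :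
    MeasurableSet (stopUnion B l J) :=
  Finset.measurableSet_biUnion _ fun j _ => measurableSet_stopSet hB l j

lemma mem_stopUnion {B : ℕ → Y → ℝ≥0∞} {l : ℝ≥0∞} {J : ℕ} {x : Y} :
    x ∈ stopUnion B l J ↔ ∃ j ≤ J, x ∈ stopSet B l j := by
  simp [stopUnion]

lemma lintegral_stopUnion {B : ℕ → Y → ℝ≥0∞} (hB : ∀ j, Measurable (B j)) (l : ℝ≥0∞) (J : ℕ)
    (h : Y → ℝ≥0∞) : ∫⁻ x in stopUnion B l J, h x ∂μ =
      ∑ j ∈ Finset.range (J + 1), ∫⁻ x in stopSet B l j, h x ∂μ := by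
  refine lintegral_biUnion_finset ?_ (fun j _ => measurableSet_stopSet hB l j) _
  intro i _ j _ hij
  exact Set.disjoint_left.2 fun x hi hj => hij (stopSet_unique hi hj)

/-- The weak type `(1, 1)` inequality for the averages, by summing over the disjoint stopping sets. -/
lemma mul_measure_stopUnion_le [IsFiniteMeasure μ] (h : Y → ℝ≥0∞) (l : ℝ≥0∞) (J : ℕ) :
    l * μ (stopUnion (fun j => G.avg j h) l J) ≤ ∫⁻ x, h x ∂μ := by
  have hB := G.adapted_avg h
  calc l * μ (stopUnion (fun j => G.avg j h) l J)
      = ∫⁻ x in stopUnion (fun j => G.avg j h) l J, l ∂μ := by rw [setLIntegral_const]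
    _ = ∑ j ∈ Finset.range (J + 1), ∫⁻ x in stopSet (fun j => G.avg j h) l j, l ∂μ :=
        lintegral_stopUnion hB.1 l J _
    _ ≤ ∑ j ∈ Finset.range (J + 1), ∫⁻ x in stopSet (fun j => G.avg j h) l j, h x ∂μ := by
        refine Finset.sum_le_sum fun j _ => ?_
        refine le_trans ?_ (G.setLIntegral_avg (measurableSet_stopSet hB.1 l j)
          (G.sat_stopSet hB l j) h).le
        exact setLIntegral_mono' (measurableSet_stopSet hB.1 l j) fun x hx => hx.1.le
    _ = ∫⁻ x in stopUnion (fun j => G.avg j h) l J, h x ∂μ := (lintegral_stopUnion hB.1 l J _).symm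
    _ ≤ ∫⁻ x, h x ∂μ := setLIntegral_le_lintegral _ _

lemma lt_smax_iff {J : ℕ} {h : Y → ℝ≥0∞} {x : Y} {l : ℝ≥0∞} :
    l < G.smax J h x ↔ ∃ i ≤ J, l < G.avg i h x := by
  simp [smax, lt_iSup_iff]

lemma mul_measure_smax_le [IsFiniteMeasure μ] (h : Y → ℝ≥0∞) (l : ℝ≥0∞) (J : ℕ) :
    l * μ {x | l < G.smax J h x} ≤ ∫⁻ x, h x ∂μ := by
  refine le_trans ?_ (G.mul_measure_stopUnion_le h l J)
  refine mul_le_mul_right (measure_mono fun x hx => ?_) _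
  obtain ⟨i, hi, hx⟩ := G.lt_smax_iff.1 hx
  obtain ⟨j, hj, hx⟩ := exists_stopSet (B := fun j => G.avg j h) hx
  exact mem_stopUnion.2 ⟨j, hj.trans hi, hx⟩

lemma avg_add_le {j : ℕ} {g h : Y → ℝ≥0∞} (hg : Measurable g) (x : Y) :
    G.avg j (fun y => g y + h y) x = G.avg j g x + G.avg j h x := by
  unfold avg
  rw [lintegral_add_left hg, mul_add]

/-- Doob's maximal inequality. -/
lemma doob [IsFiniteMeasure μ] {p : ℝ} (hp : 1 < p) {h : Y → ℝ≥0∞} (hm : Measurable h) (J : ℕ) :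
    ∫⁻ x, G.smax J h x ^ p ∂μ ≤ 2 ^ p * ENNReal.ofReal (p / (p - 1)) * ∫⁻ x, h x ^ p ∂μ := by
  have hp0 : 0 < p := by linarith
  have hp1 : 0 < p - 1 := by linarith
  have hA := G.measurable_smax J h
  have key : ∀ l : ℝ, 0 < l → ENNReal.ofReal l * μ {x | ENNReal.ofReal l < 2⁻¹ * G.smax J h x} ≤
      (μ.withDensity h) {x | ENNReal.ofReal l < h x} := by
    intro l hl
    have hSm : MeasurableSet {x | ENNReal.ofReal l < h x} := measurableSet_lt measurable_const hm
    rw [withDensity_apply _ hSm, ← lintegral_indicator hSm]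
    refine le_trans ?_ (G.mul_measure_smax_le _ (ENNReal.ofReal l) J)
    refine mul_le_mul_right (measure_mono fun x hx => ?_) _
    have hx : 2 * ENNReal.ofReal l < G.smax J h x := by
      have : ENNReal.ofReal l < 2⁻¹ * G.smax J h x := hx
      rwa [mul_comm (2⁻¹ : ℝ≥0∞), ← div_eq_mul_inv, ENNReal.lt_div_iff_mul_lt (by simp) (by simp),
          mul_comm] at this
    obtain ⟨i, hi, hx⟩ := G.lt_smax_iff.1 hx
    refine G.lt_smax_iff.2 ⟨i, hi, ?_⟩
    by_contra hcon
    rw [not_lt] at hcon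
    refine absurd hx (not_lt.2 ?_)
    calc G.avg i h x ≤ G.avg i (fun y => {x | ENNReal.ofReal l < h x}.indicator h y +
          ENNReal.ofReal l) x := by
          refine G.avg_mono (fun y => ?_) x
          by_cases hy : ENNReal.ofReal l < h y
          · rw [indicator_of_mem (show y ∈ {x | ENNReal.ofReal l < h x} from hy)]; exact le_self_add
          · exact (not_lt.1 hy).trans le_add_self
      _ = _ := G.avg_add_le (hm.indicator hSm) x
      _ ≤ ENNReal.ofReal l + ENNReal.ofReal l := add_le_add hcon (G.avg_const_le _ _ _)
      _ = 2 * ENNReal.ofReal l := (two_mul _).symm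
  have h2 : (2 : ℝ≥0∞) ^ p * 2⁻¹ ^ p = 1 := by
    rw [← ENNReal.mul_rpow_of_nonneg _ _ hp0.le, ENNReal.mul_inv_cancel (by simp) (by simp),
        ENNReal.one_rpow]
  have main : ∫⁻ x, (2⁻¹ * G.smax J h x) ^ p ∂μ ≤
      ENNReal.ofReal (p / (p - 1)) * ∫⁻ x, h x ^ p ∂μ := by
    rw [lintegral_rpow_layer μ hp0 (hA.const_mul _)]
    calc _ ≤ ∫⁻ l in Ioi (0 : ℝ), ENNReal.ofReal (p / (p - 1)) * (ENNReal.ofReal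
          ((p - 1) * l ^ (p - 1 - 1)) * (μ.withDensity h) {x | ENNReal.ofReal l < h x}) := by
          refine setLIntegral_mono' measurableSet_Ioi fun l hl => ?_
          have hl : 0 < l := hl
          refine le_trans (le_of_eq ?_) (mul_le_mul_right (mul_le_mul_right (key l hl) _) _)
          rw [← mul_assoc, ← mul_assoc, ← ENNReal.ofReal_mul (by positivity),
            ← ENNReal.ofReal_mul (by positivity)]
          congr 2
          rw [Real.rpow_sub_one hl.ne' (p - 1)]
          field_simp
      _ = ENNReal.ofReal (p / (p - 1)) * ∫⁻ x, h x ^ (p - 1) ∂(μ.withDensity h) := by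
          rw [lintegral_const_mul', ← lintegral_rpow_layer _ hp1 hm]
          exact ENNReal.ofReal_ne_top
      _ = _ := by
          rw [lintegral_withDensity_eq_lintegral_mul _ hm (hm.pow_const _)]
          congr 1
          refine lintegral_congr fun x => ?_
          simp only [Pi.mul_apply]
          conv_rhs => rw [show p = 1 + (p - 1) by ring,
            ENNReal.rpow_add_of_nonneg _ _ zero_le_one hp1.le, ENNReal.rpow_one]
  simp only [ENNReal.mul_rpow_of_nonneg _ _ hp0.le] at main
  rw [lintegral_const_mul _ (hA.pow_const p)] at main
  calc ∫⁻ x, G.smax J h x ^ p ∂μ = 2 ^ p * (2⁻¹ ^ p * ∫⁻ x, G.smax J h x ^ p ∂μ) := by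
        rw [← mul_assoc, h2, one_mul]
    _ ≤ _ := by rw [mul_assoc]; exact mul_le_mul_right main _

end Grid

end

/-! ### Calderón–Zygmund stopping and the weak-type bound -/

section

namespace Grid
variable {Y : Type} [MeasurableSpace Y] {μ : Measure Y} (G : Grid μ)

/-- The Calderón–Zygmund good part of `h` for the stopping rule `B > l`: the average over the stopping
cell on the stopping sets of positive level, and the average of level `J` where no stopping occurs. On
the stopping set of level `0` it is set to `0`, because a cell of level `0` has no parent by which to
bound its average. -/
def stopped (B : ℕ → Y → ℝ≥0∞) (l : ℝ≥0∞) (J : ℕ) (h : Y → ℝ≥0∞) (x : Y) : ℝ≥0∞ :=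
  (∑ j ∈ Finset.range J, (stopSet B l (j + 1)).indicator (G.avg (j + 1) h) x) +
    (stopUnion B l J)ᶜ.indicator (G.avg J h) x

variable {B : ℕ → Y → ℝ≥0∞} {l : ℝ≥0∞} {J : ℕ}

lemma stopped_of_notMem {x : Y} (hx : x ∉ stopUnion B l J) (h : Y → ℝ≥0∞) :
    G.stopped B l J h x = G.avg J h x := by
  unfold stopped
  rw [indicator_of_mem (show x ∈ (stopUnion B l J)ᶜ from hx), Finset.sum_eq_zero, zero_add]
  intro j hj
  refine indicator_of_notMem (fun hxj => hx ?_) _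
  exact mem_stopUnion.2 ⟨j + 1, Finset.mem_range.1 hj, hxj⟩

lemma stopped_of_mem_zero {x : Y} (hx : x ∈ stopSet B l 0) (h : Y → ℝ≥0∞) :
    G.stopped B l J h x = 0 := by
  unfold stopped
  rw [indicator_of_notMem, Finset.sum_eq_zero, zero_add]
  · intro j _
    exact indicator_of_notMem (fun hxj => absurd (stopSet_unique hx hxj) (by simp)) _
  · simpa using mem_stopUnion.2 ⟨0, Nat.zero_le _, hx⟩

lemma stopped_of_mem_succ {x : Y} {j : ℕ} (hj : j < J) (hx : x ∈ stopSet B l (j + 1))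
    (h : Y → ℝ≥0∞) : G.stopped B l J h x = G.avg (j + 1) h x := by
  unfold stopped
  rw [indicator_of_notMem, add_zero, Finset.sum_eq_single j, indicator_of_mem hx]
  · intro i _ hij
    refine indicator_of_notMem (fun hxi => hij ?_) _
    have := stopSet_unique hx hxi
    lia
  · intro hj'; exact absurd (Finset.mem_range.2 hj) hj'
  · simpa using mem_stopUnion.2 ⟨j + 1, hj, hx⟩

lemma measurable_stopped (hB : ∀ j, Measurable (B j)) (h : Y → ℝ≥0∞) :
    Measurable (G.stopped B l J h) := by
  unfold stopped
  refine Measurable.add (Finset.measurable_sum _ fun j _ => ?_) ?_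
  · exact (G.measurable_avg _ h).indicator (measurableSet_stopSet hB l _)
  · exact (G.measurable_avg _ h).indicator (measurableSet_stopUnion hB l _).compl

lemma measurable_stopped_uncurry {α : Type} [MeasurableSpace α] [SFinite μ]
    (hB : ∀ j, Measurable (B j)) {f : Y → α → ℝ≥0∞} (hf : Measurable (Function.uncurry f)) :
    Measurable fun q : Y × α => G.stopped B l J (fun y => f y q.2) q.1 := by
  have key : ∀ (S : Set Y) (j : ℕ), MeasurableSet S →
      Measurable fun q : Y × α => S.indicator (G.avg j fun y => f y q.2) q.1 := by
    intro S j hS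
    have : (fun q : Y × α => S.indicator (G.avg j fun y => f y q.2) q.1) =
        (Prod.fst ⁻¹' S).indicator fun q : Y × α => G.avg j (fun y => f y q.2) q.1 := by
      ext q; rfl
    rw [this]
    exact (G.measurable_avg_uncurry j hf).indicator (measurable_fst hS)
  unfold stopped
  exact Measurable.add (Finset.measurable_sum _ fun j _ => key _ _ (measurableSet_stopSet hB l _))
    (key _ _ (measurableSet_stopUnion hB l _).compl)

lemma sat_stopUnion (hB : G.Adapted B) : G.Sat J (stopUnion B l J) := by
  intro x y hxy hx
  obtain ⟨j, hj, hx⟩ := mem_stopUnion.1 hx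
  exact mem_stopUnion.2 ⟨j, hj, G.sat_stopSet hB l j x y (G.nested_le hj hxy) hx⟩

lemma Sat.compl {S : Set Y} (h : G.Sat J S) : G.Sat J Sᶜ :=
  fun x y hxy hx hy => hx (h y x hxy.symm hy)

lemma Sat.inter {S T : Set Y} (h : G.Sat J S) (h' : G.Sat J T) : G.Sat J (S ∩ T) :=
  fun x y hxy hx => ⟨h x y hxy hx.1, h' x y hxy hx.2⟩

lemma setLIntegral_stopped (hB : ∀ j, Measurable (B j)) (h : Y → ℝ≥0∞) (Q : Set Y) :
    ∫⁻ x in Q, G.stopped B l J h x ∂μ =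
      (∑ j ∈ Finset.range J, ∫⁻ x in stopSet B l (j + 1), G.avg (j + 1) h x ∂(μ.restrict Q)) +
      ∫⁻ x in (stopUnion B l J)ᶜ, G.avg J h x ∂(μ.restrict Q) := by
  unfold stopped
  rw [lintegral_add_right, lintegral_finsetSum, lintegral_indicator]
  · congr 1
    refine Finset.sum_congr rfl fun j _ => ?_
    rw [lintegral_indicator (measurableSet_stopSet hB l _)]
  · exact (measurableSet_stopUnion hB l _).compl
  · exact fun j _ => (G.measurable_avg _ h).indicator (measurableSet_stopSet hB l _)
  · exact (G.measurable_avg _ h).indicator (measurableSet_stopUnion hB l _).compl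

lemma lintegral_split (hB : ∀ j, Measurable (B j)) (h : Y → ℝ≥0∞) (Q : Set Y) :
    ∫⁻ x in Q, h x ∂μ = (∑ j ∈ Finset.range J, ∫⁻ x in stopSet B l (j + 1), h x ∂(μ.restrict Q)) +
      ∫⁻ x in stopSet B l 0, h x ∂(μ.restrict Q) +
      ∫⁻ x in (stopUnion B l J)ᶜ, h x ∂(μ.restrict Q) := by
  rw [← lintegral_add_compl h (measurableSet_stopUnion hB l J), lintegral_stopUnion hB,
    Finset.sum_range_succ']

/-- Off the stopping sets, passing to the good part does not change the averages of level at most `J`: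
a cell met before stopping is a union of stopping cells and of cells of level `J`. -/
lemma avg_stopped [IsFiniteMeasure μ] (hB : G.Adapted B) {i : ℕ} (hi : i ≤ J) {x : Y}
    (hx : x ∉ stopUnion B l J) (h : Y → ℝ≥0∞) :
    G.avg i (G.stopped B l J h) x = G.avg i h x := by
  have hQm := G.measurableSet_cell i x
  -- a cell of level `i` through `x` misses every stopping set of level at most `i`
  have hdis : ∀ j ≤ i, stopSet B l j ∩ G.cell i x = ∅ := by
    intro j hj
    ext y
    simp only [mem_inter_iff, mem_empty_iff_false, iff_false, not_and]
    intro hy hyx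
    refine hx (mem_stopUnion.2 ⟨j, hj.trans hi, ?_⟩)
    exact G.sat_stopSet hB l j y x (G.nested_le hj hyx) hy
  unfold avg
  congr 1
  rw [G.setLIntegral_stopped hB.1, lintegral_split (J := J) (l := l) hB.1 h]
  congr 1
  · have h0 : ∫⁻ y in stopSet B l 0, h y ∂(μ.restrict (G.cell i x)) = 0 := by
      rw [Measure.restrict_restrict (measurableSet_stopSet hB.1 l 0), hdis 0 (Nat.zero_le _)]
      simp
    rw [h0, add_zero]
    refine Finset.sum_congr rfl fun j _ => ?_
    rw [Measure.restrict_restrict (measurableSet_stopSet hB.1 l _)]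
    rcases le_total (j + 1) i with hj | hj
    · rw [hdis _ hj]; simp
    · exact G.setLIntegral_avg ((measurableSet_stopSet hB.1 l _).inter hQm)
        ((G.sat_stopSet hB l _).inter _ (G.sat_cell hj x)) h
  · rw [Measure.restrict_restrict (measurableSet_stopUnion hB.1 l _).compl]
    exact G.setLIntegral_avg ((measurableSet_stopUnion hB.1 l _).compl.inter hQm)
        (((G.sat_stopUnion hB).compl).inter _ (G.sat_cell hi x)) h

lemma lintegral_stopped_le [IsFiniteMeasure μ] (hB : G.Adapted B) (h : Y → ℝ≥0∞) :
    ∫⁻ x, G.stopped B l J h x ∂μ ≤ ∫⁻ x, h x ∂μ := by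
  rw [← setLIntegral_univ, ← setLIntegral_univ h, G.setLIntegral_stopped hB.1,
    lintegral_split (J := J) (l := l) hB.1 h]
  simp only [Measure.restrict_univ]
  rw [G.setLIntegral_avg (measurableSet_stopUnion hB.1 l _).compl (G.sat_stopUnion hB).compl]
  gcongr
  refine le_trans (Finset.sum_le_sum fun j _ => ?_) le_self_add
  rw [G.setLIntegral_avg (measurableSet_stopSet hB.1 l _) (G.sat_stopSet hB l _)]

lemma avg_succ_le (j : ℕ) (h : Y → ℝ≥0∞) [IsFiniteMeasure μ] (x : Y) :
    G.avg (j + 1) h x ≤ 2 * G.avg j h x := by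
  have hsub : G.cell (j + 1) x ⊆ G.cell j x := fun y hy => G.nested j y x hy
  have hd : μ (G.cell j x) ≤ 2 * μ (G.cell (j + 1) x) := G.doubling j x
  unfold avg
  rw [← mul_assoc]
  by_cases h0 : μ (G.cell (j + 1) x) = 0
  · rw [setLIntegral_measure_zero _ _ h0]; simp
  refine mul_le_mul' ?_ (lintegral_mono_set hsub)
  rw [← div_eq_mul_inv, ENNReal.le_div_iff_mul_le (Or.inr (by simp)) (Or.inl (measure_ne_top _ _)),
    mul_comm, ← div_eq_mul_inv]
  exact ENNReal.div_le_of_le_mul hd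

/-- The good part is at most `2 * l`: the parent of a stopping cell has average at most `l`. -/
lemma stopped_le [IsFiniteMeasure μ] (h : Y → ℝ≥0∞) (x : Y) :
    G.stopped (fun j => G.avg j h) l J h x ≤ 2 * l := by
  by_cases hx : x ∈ stopUnion (fun j => G.avg j h) l J
  · obtain ⟨j, hj, hx⟩ := mem_stopUnion.1 hx
    rcases j with _ | j
    · rw [G.stopped_of_mem_zero hx]; exact zero_le
    · rw [G.stopped_of_mem_succ hj hx]
      exact (G.avg_succ_le j h x).trans (mul_le_mul_right (hx.2 j j.lt_succ_self) _)
  · rw [G.stopped_of_notMem hx]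
    have : G.avg J h x ≤ l := by
      by_contra hc
      obtain ⟨j, hj, hxj⟩ := exists_stopSet (B := fun j => G.avg j h) (not_le.1 hc)
      exact hx (mem_stopUnion.2 ⟨j, hj, hxj⟩)
    exact this.trans (le_mul_of_one_le_left' one_le_two)

variable {α : Type} [MeasurableSpace α] {ρ : (α → ℝ≥0∞) → ℝ≥0∞}

lemma norm_avg_le (hρ : LatNorm ρ) [IsFiniteMeasure μ] {f : Y → α → ℝ≥0∞}
    (hf : Measurable (Function.uncurry f)) (j : ℕ) (x : Y) :
    ρ (fun a => G.avg j (fun y => f y a) x) ≤ G.avg j (fun y => ρ (f y)) x := by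
  have := hρ.mink ((μ (G.cell j x))⁻¹ • μ.restrict (G.cell j x)) f hf
  simpa [lintegral_smul_measure, avg] using this

lemma norm_stopped_le (hρ : LatNorm ρ) [IsFiniteMeasure μ] {f : Y → α → ℝ≥0∞}
    (hf : Measurable (Function.uncurry f)) (x : Y) :
    ρ (fun a => G.stopped B l J (fun y => f y a) x) ≤ G.stopped B l J (fun y => ρ (f y)) x := by
  by_cases hx : x ∈ stopUnion B l J
  · obtain ⟨j, hj, hx⟩ := mem_stopUnion.1 hx
    rcases j with _ | j
    · simp only [G.stopped_of_mem_zero hx, hρ.zero, le_refl]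
    · simp only [G.stopped_of_mem_succ hj hx]
      exact G.norm_avg_le hρ hf _ _
  · simp only [G.stopped_of_notMem hx]
    exact G.norm_avg_le hρ hf _ _

end Grid

open Grid

variable {α : Type} [MeasurableSpace α] {ρ : (α → ℝ≥0∞) → ℝ≥0∞}

/-- The vector-valued dyadic maximal operator `f ↦ G.star J f` is bounded on `L^s(μ; ρ)` with constant
`C`, uniformly over all finite measures `μ`, all grids `G` and all numbers of levels `J`. -/
def HLBound (ρ : (α → ℝ≥0∞) → ℝ≥0∞) (s : ℝ) (C : ℝ≥0) : Prop :=
  ∀ (Y : Type) [MeasurableSpace Y] (μ : Measure Y) [IsFiniteMeasure μ] (G : Grid μ) (J : ℕ)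
    (f : Y → α → ℝ≥0∞), Measurable (Function.uncurry f) →
    ∫⁻ x, ρ (G.star J f x) ^ s ∂μ ≤ C * ∫⁻ x, ρ (f x) ^ s ∂μ

/-- Boundedness on `L^s(ρ)` implies the weak type `(1, 1)`. Outside the stopping sets of `ρ(f)` the
function may be replaced by its good part, whose `ρ`-norm is at most `2 * l`; the `L^s` bound then applies
to it, and no estimate for the bad part is needed. -/
lemma weak_type (hρ : LatNorm ρ) {s : ℝ} (hs : 1 < s) {C : ℝ≥0} (hC : HLBound ρ s C)
    {Y : Type} [MeasurableSpace Y] (μ : Measure Y) [IsFiniteMeasure μ] (G : Grid μ) (J : ℕ)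
    (f : Y → α → ℝ≥0∞) (hf : Measurable (Function.uncurry f)) {l : ℝ≥0∞} (hl0 : l ≠ 0)
    (hl : l ≠ ∞) :
    l * μ {x | l < ρ (G.star J f x)} ≤ (1 + 2 ^ (s - 1) * C) * ∫⁻ x, ρ (f x) ∂μ := by
  have hs0 : 0 < s := by linarith
  set F : Y → ℝ≥0∞ := fun x => ρ (f x)
  have hF : Measurable F := hρ.meas f hf
  set B : ℕ → Y → ℝ≥0∞ := fun j => G.avg j F with hBdef
  have hB : G.Adapted B := G.adapted_avg F
  set g : Y → α → ℝ≥0∞ := fun x a => G.stopped B l J (fun y => f y a) x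
  have hg : Measurable (Function.uncurry g) := G.measurable_stopped_uncurry hB.1 hf
  have hstar : Measurable fun x => ρ (G.star J g x) :=
    hρ.meas _ (G.measurable_smax_uncurry J hg)
  have hsub : {x | l < ρ (G.star J f x)} ⊆ stopUnion B l J ∪ {x | l < ρ (G.star J g x)} := by
    intro x hx
    by_cases hxΩ : x ∈ stopUnion B l J
    · exact Or.inl hxΩ
    · refine Or.inr (lt_of_lt_of_le hx (hρ.mono _ _ fun a => ?_))
      refine iSup₂_mono fun i hi => ?_
      exact (G.avg_stopped hB hi hxΩ _).ge
  have h1 : l * μ (stopUnion B l J) ≤ ∫⁻ x, F x ∂μ := G.mul_measure_stopUnion_le F l J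
  have h2 : l * μ {x | l < ρ (G.star J g x)} ≤ 2 ^ (s - 1) * C * ∫⁻ x, F x ∂μ := by
    have h3 : l ^ s * μ {x | l < ρ (G.star J g x)} ≤ ∫⁻ x, ρ (G.star J g x) ^ s ∂μ := by
      refine le_trans (mul_le_mul_right (measure_mono fun x hx => ?_) _)
        (mul_meas_ge_le_lintegral (hstar.pow_const s) (l ^ s))
      exact ENNReal.rpow_le_rpow (le_of_lt hx) hs0.le
    have h4 : ∫⁻ x, ρ (g x) ^ s ∂μ ≤ (2 * l) ^ (s - 1) * ∫⁻ x, F x ∂μ := by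
      calc ∫⁻ x, ρ (g x) ^ s ∂μ ≤ ∫⁻ x, (2 * l) ^ (s - 1) * G.stopped B l J F x ∂μ := by
            refine lintegral_mono fun x => ?_
            have hle : ρ (g x) ≤ G.stopped B l J F x := G.norm_stopped_le hρ hf x
            calc ρ (g x) ^ s = ρ (g x) ^ (s - 1) * ρ (g x) := by
                  conv_lhs => rw [show s = (s - 1) + 1 by ring]
                  rw [ENNReal.rpow_add_of_nonneg _ _ (by linarith) zero_le_one, ENNReal.rpow_one]
              _ ≤ _ := by
                  refine mul_le_mul' (ENNReal.rpow_le_rpow ?_ (by linarith)) hle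
                  exact hle.trans (G.stopped_le F x)
        _ = (2 * l) ^ (s - 1) * ∫⁻ x, G.stopped B l J F x ∂μ :=
            lintegral_const_mul _ (G.measurable_stopped hB.1 F)
        _ ≤ _ := mul_le_mul_right (G.lintegral_stopped_le hB F) _
    have h5 : l ^ s * μ {x | l < ρ (G.star J g x)} ≤
        l ^ (s - 1) * (2 ^ (s - 1) * C * ∫⁻ x, F x ∂μ) := by
      refine h3.trans ((hC Y μ G J g hg).trans ((mul_le_mul_right h4 _).trans (le_of_eq ?_)))
      rw [ENNReal.mul_rpow_of_nonneg _ _ (by linarith)]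
      ring
    have h6 : l ^ s = l ^ (s - 1) * l := by
      conv_lhs => rw [show s = (s - 1) + 1 by ring]
      rw [ENNReal.rpow_add_of_nonneg _ _ (by linarith) zero_le_one, ENNReal.rpow_one]
    rw [h6, mul_assoc] at h5
    refine (ENNReal.mul_le_mul_iff_right ?_ ?_).1 h5
    · simp [ENNReal.rpow_eq_zero_iff, hl0, hl]
    · exact ENNReal.rpow_ne_top_of_nonneg (by linarith) hl
  calc _ ≤ l * (μ (stopUnion B l J) + μ {x | l < ρ (G.star J g x)}) :=
        mul_le_mul_right ((measure_mono hsub).trans (measure_union_le _ _)) _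
    _ ≤ _ := by rw [mul_add, add_mul, one_mul]; exact add_le_add h1 h2

end

/-! ### Good-λ inequality and extrapolation -/

section

open Grid

variable {α : Type} [MeasurableSpace α] {ρ : (α → ℝ≥0∞) → ℝ≥0∞}

section
variable {Y : Type} [MeasurableSpace Y] {μ : Measure Y} (G : Grid μ)

lemma Grid.measurable_norm_star [SFinite μ] (hρ : LatNorm ρ) {f : Y → α → ℝ≥0∞}
    (hf : Measurable (Function.uncurry f)) (J : ℕ) : Measurable fun x => ρ (G.star J f x) :=
  hρ.meas _ (G.measurable_smax_uncurry J hf)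

lemma Grid.measurable_avg_param [SFinite μ] {f : Y → α → ℝ≥0∞}
    (hf : Measurable (Function.uncurry f)) (i : ℕ) (z : Y) :
    Measurable fun a => G.avg i (fun x => f x a) z := by
  have h := G.measurable_avg_uncurry i hf
  have h2 : Measurable (fun a : α => (z, a)) := measurable_prodMk_left
  have h3 := Measurable.comp h h2
  have h4 : Measurable fun a => G.avg i (fun x => f x (z,a).2) (z, a).1 := h3
  exact h4

lemma Grid.measurable_star_param [SFinite μ] {f : Y → α → ℝ≥0∞}
    (hf : Measurable (Function.uncurry f)) (J : ℕ) (z : Y) : Measurable (G.star J f z) := by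
  have h := G.measurable_smax_uncurry J hf
  have h2 : Measurable (fun a : α => (z, a)) := measurable_prodMk_left
  have h3 : Measurable fun a => Function.uncurry (G.star J f) (z, a) := h.comp h2
  simpa only [Function.uncurry_apply_pair] using h3

lemma Grid.adapted_norm_star [SFinite μ] (hρ : LatNorm ρ) {f : Y → α → ℝ≥0∞}
    (hf : Measurable (Function.uncurry f)) : G.Adapted fun j x => ρ (G.star j f x) := by
  refine ⟨fun j => G.measurable_norm_star hρ hf j, fun j x y hxy => ?_⟩
  have : G.star j f x = G.star j f y := by
    ext a
    exact iSup_congr fun i => iSup_congr fun hi => G.avg_congr (G.nested_le hi hxy) _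
  simp only [this]

/-- Localisation: on a cell `Q` of level `j`, the averages of level `< j` and the averages of
`f 1_Q` together control the maximal function. -/
lemma Grid.star_le_add (f : Y → α → ℝ≥0∞) (j J : ℕ) {y z : Y} (hz : z ∈ G.cell j y) (a : α) :
    G.star J f z a ≤ (⨆ (i : ℕ) (_ : i < j), G.avg i (fun x => f x a) z) +
      G.star J (fun x a => (G.cell j y).indicator (fun x => f x a) x) z a := by
  refine iSup₂_le fun i hi => ?_
  rcases lt_or_ge i j with h | h
  · exact (le_iSup₂ (f := fun i (_ : i < j) => G.avg i (fun x => f x a) z) i h).trans le_self_add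
  · have hsub : G.cell i z ⊆ G.cell j y := fun w hw => (G.nested_le h hw).trans hz
    have : G.avg i (fun x => f x a) z =
        G.avg i (fun x => (G.cell j y).indicator (fun x => f x a) x) z := by
      unfold avg
      congr 1
      exact setLIntegral_congr_fun (G.measurableSet_cell i z) fun w hw =>
        (indicator_of_mem (hsub hw) (fun x => f x a)).symm
    rw [this]
    exact (G.avg_le_smax hi _ z).trans le_add_self

/-- The good-`λ` inequality on a single stopping cell `Q`. Levels above `Q` contribute at most `l` by the
choice of the stopping level, so where the maximal function exceeds `2 * l`, that of `f 1_Q` exceeds `l`;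
to the latter `weak_type` applies. -/
lemma Grid.local_good_lambda [IsFiniteMeasure μ] (hρ : LatNorm ρ) {s : ℝ} (hs : 1 < s) {C : ℝ≥0}
    (hC : HLBound ρ s C) {f : Y → α → ℝ≥0∞} (hf : Measurable (Function.uncurry f)) {j J : ℕ}
    (hj : j ≤ J) {l γ : ℝ≥0∞} (hl0 : l ≠ 0) (hl : l ≠ ∞) {y : Y}
    (hy : y ∈ stopSet (fun j x => ρ (G.star j f x)) l j)
    (hyB : G.smax J (fun x => ρ (f x)) y ≤ γ * l) :
    μ ({x | 2 * l < ρ (G.star J f x)} ∩ G.cell j y) ≤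
      (1 + 2 ^ (s - 1) * C) * γ * μ (G.cell j y) := by
  set Q := G.cell j y with hQ
  have hQm : MeasurableSet Q := G.measurableSet_cell j y
  set g : Y → α → ℝ≥0∞ := fun x a => Q.indicator (fun x => f x a) x with hgdef
  have hg : Measurable (Function.uncurry g) := by
    have : Function.uncurry g = (Prod.fst ⁻¹' Q).indicator (Function.uncurry f) := by
      ext q; rfl
    rw [this]
    exact hf.indicator (measurable_fst hQm)
  have hρg : ∀ x, ρ (g x) = Q.indicator (fun x => ρ (f x)) x := by
    intro x
    by_cases hx : x ∈ Q
    · simp [hgdef, indicator_of_mem hx]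
    · simp [hgdef, indicator_of_notMem hx, hρ.zero]
  have hsub : {x | 2 * l < ρ (G.star J f x)} ∩ Q ⊆ {x | l < ρ (G.star J g x)} := by
    rintro z ⟨hz2, hzQ⟩
    have hzs : z ∈ stopSet (fun j x => ρ (G.star j f x)) l j :=
      G.sat_stopSet (G.adapted_norm_star hρ hf) l j y z hzQ.symm hy
    have hprev : ρ (fun a => ⨆ (i : ℕ) (_ : i < j), G.avg i (fun x => f x a) z) ≤ l := by
      rcases j with _ | j
      · simp [hρ.zero]
      · simp only [Nat.lt_succ_iff]
        exact hzs.2 j j.lt_succ_self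
    have h1 : ρ (G.star J f z) ≤ l + ρ (G.star J g z) := by
      have hu : Measurable fun a => ⨆ (i : ℕ) (_ : i < j), G.avg i (fun x => f x a) z :=
        Measurable.iSup fun i => Measurable.iSup_Prop _ (G.measurable_avg_param hf i z)
      have hv : Measurable (G.star J g z) :=
        G.measurable_star_param hg J z
      have h0 := hρ.add_le _ _ hu hv
      exact (hρ.mono _ _ fun a => G.star_le_add f j J hzQ a).trans
        (h0.trans (add_le_add hprev le_rfl))
    have h2 : l + l < l + ρ (G.star J g z) := by
      rw [← two_mul]; exact lt_of_lt_of_le hz2 h1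
    exact (ENNReal.add_lt_add_iff_left hl).1 h2
  have hw := weak_type hρ hs hC μ G J g hg hl0 hl
  have hF : ∫⁻ x, ρ (g x) ∂μ ≤ l * (γ * μ Q) := by
    simp only [hρg]
    rw [lintegral_indicator hQm]
    by_cases h0 : μ Q = 0
    · rw [setLIntegral_measure_zero _ _ h0]; exact zero_le
    have h3 : G.avg j (fun x => ρ (f x)) y ≤ γ * l := (G.avg_le_smax hj _ y).trans hyB
    have h4 : ∫⁻ x in Q, ρ (f x) ∂μ = μ Q * G.avg j (fun x => ρ (f x)) y := by
      unfold avg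
      rw [← mul_assoc, ENNReal.mul_inv_cancel h0 (measure_ne_top _ _), one_mul]
    rw [h4]
    calc _ ≤ μ Q * (γ * l) := mul_le_mul_right h3 _
      _ = _ := by ring
  have h5 : l * μ ({x | 2 * l < ρ (G.star J f x)} ∩ Q) ≤
      l * ((1 + 2 ^ (s - 1) * C) * γ * μ Q) := by
    calc _ ≤ l * μ {x | l < ρ (G.star J g x)} := mul_le_mul_right (measure_mono hsub) _
      _ ≤ _ := hw
      _ ≤ _ := mul_le_mul_right hF _
      _ = _ := by ring
  exact (ENNReal.mul_le_mul_iff_right hl0 hl).1 h5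

/-- The good-`λ` inequality between the maximal function of `f`, measured in `ρ`, and the scalar maximal
function of `ρ(f)`. -/
lemma Grid.good_lambda [IsFiniteMeasure μ] (hρ : LatNorm ρ) {s : ℝ} (hs : 1 < s) {C : ℝ≥0}
    (hC : HLBound ρ s C) {f : Y → α → ℝ≥0∞} (hf : Measurable (Function.uncurry f)) (J : ℕ)
    {l γ : ℝ≥0∞} (hl0 : l ≠ 0) (hl : l ≠ ∞) :
    μ {x | 2 * l < ρ (G.star J f x)} ≤ μ {x | γ * l < G.smax J (fun x => ρ (f x)) x} +
      (1 + 2 ^ (s - 1) * C) * γ * μ {x | l < ρ (G.star J f x)} := by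
  set A : ℕ → Y → ℝ≥0∞ := fun j x => ρ (G.star j f x) with hA
  have hAd : G.Adapted A := G.adapted_norm_star hρ hf
  set B := G.smax J (fun x => ρ (f x)) with hB
  have hBm : Measurable B := G.measurable_smax J _
  set T : Set Y := {x | 2 * l < A J x} ∩ {x | B x ≤ γ * l} with hT
  have hTm : MeasurableSet T :=
    (measurableSet_lt measurable_const (hAd.1 J)).inter (measurableSet_le hBm measurable_const)
  have hTsub : T ⊆ stopUnion A l J := by
    rintro x ⟨hx, -⟩
    have : l < A J x := lt_of_le_of_lt (le_mul_of_one_le_left' one_le_two) hx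
    obtain ⟨i, hi, hxi⟩ := exists_stopSet this
    exact mem_stopUnion.2 ⟨i, hi, hxi⟩
  have hUsub : stopUnion A l J ⊆ {x | l < A J x} := by
    intro x hx
    obtain ⟨j, hj, hxj⟩ := mem_stopUnion.1 hx
    refine lt_of_lt_of_le hxj.1 (hρ.mono _ _ fun a => ?_)
    exact iSup₂_le fun i hi => G.avg_le_smax (hi.trans hj) _ x
  have hloc : ∀ j ≤ J, ∀ x ∈ stopSet A l j, G.avg j (T.indicator 1) x ≤
      (1 + 2 ^ (s - 1) * C) * γ := by
    intro j hj x hx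
    have hQm := G.measurableSet_cell j x
    unfold avg
    rw [lintegral_indicator_one hTm, Measure.restrict_apply hTm]
    rcases (T ∩ G.cell j x).eq_empty_or_nonempty with h | ⟨y, hyT, hyQ⟩
    · simp [h]
    have hyx : G.cell j y = G.cell j x := G.cell_congr hyQ
    have h1 : μ (T ∩ G.cell j x) ≤ (1 + 2 ^ (s - 1) * C) * γ * μ (G.cell j x) := by
      rw [← hyx]
      refine (measure_mono (inter_subset_inter_left _ inter_subset_left)).trans
        (G.local_good_lambda hρ hs hC hf hj hl0 hl ?_ hyT.2)
      exact G.sat_stopSet hAd l j x y hyQ.symm hx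
    rw [mul_comm, ← div_eq_mul_inv]
    exact ENNReal.div_le_of_le_mul h1
  have hμT : μ T ≤ (1 + 2 ^ (s - 1) * C) * γ * μ (stopUnion A l J) := by
    calc μ T = ∫⁻ x in stopUnion A l J, T.indicator 1 x ∂μ := by
          rw [lintegral_indicator_one hTm, Measure.restrict_apply hTm,
            inter_eq_self_of_subset_left hTsub]
      _ = ∑ j ∈ Finset.range (J + 1), ∫⁻ x in stopSet A l j, T.indicator 1 x ∂μ :=
          lintegral_stopUnion hAd.1 l J _
      _ ≤ ∑ j ∈ Finset.range (J + 1),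
            ∫⁻ x in stopSet A l j, (1 + 2 ^ (s - 1) * C) * γ ∂μ := by
          refine Finset.sum_le_sum fun j hj => ?_
          rw [← G.setLIntegral_avg (measurableSet_stopSet hAd.1 l j) (G.sat_stopSet hAd l j)]
          exact setLIntegral_mono' (measurableSet_stopSet hAd.1 l j)
            (hloc j (Nat.lt_succ_iff.1 (Finset.mem_range.1 hj)))
      _ = ∫⁻ x in stopUnion A l J, (1 + 2 ^ (s - 1) * C) * γ ∂μ :=
          (lintegral_stopUnion hAd.1 l J _).symm
      _ = _ := by rw [setLIntegral_const]
  have hcov : {x | 2 * l < A J x} ⊆ {x | γ * l < B x} ∪ T := by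
    intro x hx
    by_cases h : γ * l < B x
    · exact Or.inl h
    · exact Or.inr ⟨hx, not_lt.1 h⟩
  calc _ ≤ μ {x | γ * l < B x} + μ T := (measure_mono hcov).trans (measure_union_le _ _)
    _ ≤ _ := by
      gcongr
      exact hμT.trans (mul_le_mul_right (measure_mono hUsub) _)

end

/-- Boundedness on `L^s(ρ)` for one exponent `s > 1` implies boundedness on `L^p(ρ)` for every `p > 1`:
integrate the good-`λ` inequality and bound the scalar maximal function of `ρ(f)` by Doob's inequality. -/
lemma HLBound.extrapolate (hρ : LatNorm ρ) {s : ℝ} (hs : 1 < s) {C : ℝ≥0} (hC : HLBound ρ s C)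
    {p : ℝ} (hp : 1 < p) : ∃ C' : ℝ≥0, HLBound ρ p C' := by
  have hp0 : 0 < p := by linarith
  set W : ℝ≥0 := 1 + 2 ^ (s - 1) * C with hW
  have hWe : (W : ℝ≥0∞) = 1 + 2 ^ (s - 1) * C := by
    rw [hW]; push_cast
    rw [ENNReal.coe_rpow_of_nonneg _ (by linarith)]; rfl
  have hW0 : 0 < W := by rw [hW]; positivity
  -- with this choice the constant `2 ^ p * (W * γ)` of the absorbed term is exactly `1 / 2`
  set γ : ℝ≥0 := (2 * (2 ^ p * W))⁻¹ with hγdef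
  have hγ : 0 < γ := by rw [hγdef]; positivity
  have hκ : (2 : ℝ≥0∞) ^ p * ((1 + 2 ^ (s - 1) * C) * γ) ≤ 2⁻¹ := by
    have h1 : (2 : ℝ≥0) ^ p * (W * γ) = 2⁻¹ := by
      rw [hγdef]; field_simp
    have h2 : ((2 ^ p : ℝ≥0) : ℝ≥0∞) = 2 ^ p := ENNReal.coe_rpow_of_nonneg _ hp0.le
    rw [← hWe, ← h2, ← ENNReal.coe_mul, ← ENNReal.coe_mul, h1]
    exact le_of_eq (by simp)
  set K : ℝ≥0∞ := 2 * (2 ^ p * (γ⁻¹ : ℝ≥0) ^ p) * (2 ^ p * ENNReal.ofReal (p / (p - 1))) with hK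
  have hKfin : K ≠ ∞ := by
    have h2 : (2 : ℝ≥0∞) ^ p ≠ ∞ := ENNReal.rpow_ne_top_of_nonneg hp0.le (by simp)
    refine ENNReal.mul_ne_top (ENNReal.mul_ne_top (by simp) (ENNReal.mul_ne_top h2 ?_))
      (ENNReal.mul_ne_top h2 ENNReal.ofReal_ne_top)
    exact ENNReal.rpow_ne_top_of_nonneg hp0.le ENNReal.coe_ne_top
  refine ⟨K.toNNReal, fun Y _ μ _ G J f hf => ?_⟩
  rw [ENNReal.coe_toNNReal hKfin]
  have hF : Measurable fun x => ρ (f x) := hρ.meas f hf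
  refine (good_lambda_absorb μ hp0 (G.measurable_norm_star hρ hf J) (G.measurable_smax J _) hγ hκ
    fun l hl => G.good_lambda hρ hs hC hf J (by simpa using hl) ENNReal.ofReal_ne_top).trans ?_
  rw [hK, mul_assoc _ _ (∫⁻ x, ρ (f x) ^ p ∂μ)]
  exact mul_le_mul_right (G.doob hp hF J) _

/-- The dyadic maximal inequality for `ρ`-valued functions, for all exponents. -/
def HL (ρ : (α → ℝ≥0∞) → ℝ≥0∞) : Prop := ∀ s : ℝ, 1 < s → ∃ C : ℝ≥0, HLBound ρ s C

lemma latNorm_eval : LatNorm (fun f : Unit → ℝ≥0∞ => f ()) where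
  mono _ _ h := h ()
  meas _ hf := hf.comp (measurable_id.prodMk measurable_const)
  mink _ _ _ _ := le_rfl
  iSup_le _ _ _ := le_rfl

/-- For scalar functions the property `HL` is Doob's inequality. -/
lemma hl_eval : HL (fun f : Unit → ℝ≥0∞ => f ()) := by
  intro s hs
  have hfin : (2 : ℝ≥0∞) ^ s * ENNReal.ofReal (s / (s - 1)) ≠ ∞ :=
    ENNReal.mul_ne_top (ENNReal.rpow_ne_top_of_nonneg (by linarith) (by simp))
      ENNReal.ofReal_ne_top
  refine ⟨((2 : ℝ≥0∞) ^ s * ENNReal.ofReal (s / (s - 1))).toNNReal, fun Y _ μ _ G J f hf => ?_⟩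
  rw [ENNReal.coe_toNNReal hfin]
  exact G.doob hs (hf.comp (measurable_id.prodMk measurable_const)) J

/-- `HL` is inherited by the `L^t` norm in an extra variable. For the exponent `t` this is Fubini's theorem,
the maximal operator acting on each slice separately; the other exponents follow by extrapolation. -/
lemma HL.ext {α' Ω : Type} [MeasurableSpace α'] [MeasurableSpace Ω] (hρ : LatNorm ρ) (h : HL ρ)
    (ν : Measure Ω) [SigmaFinite ν] {e : Ω → α → α'} (he : Measurable (Function.uncurry e))
    {t : ℝ} (ht : 1 < t) : HL (extNorm ρ ν e t) := by
  have ht0 : 0 < t := by linarith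
  obtain ⟨C, hC⟩ := h t ht
  suffices h1 : HLBound (extNorm ρ ν e t) t C from
    fun p hp => h1.extrapolate (hρ.ext ν he ht) ht hp
  intro Y _ μ _ G J f hf
  have hpow : ∀ g : α' → ℝ≥0∞, extNorm ρ ν e t g ^ t =
      ∫⁻ ω, ρ (fun a => g (e ω a)) ^ t ∂ν := by
    intro g
    unfold extNorm
    rw [← ENNReal.rpow_mul, one_div_mul_cancel ht0.ne', ENNReal.rpow_one]
  simp only [hpow]
  have hcomp : ∀ k : Y → α' → ℝ≥0∞, Measurable (Function.uncurry k) →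
      Measurable fun q : Y × Ω => ρ (fun a => k q.1 (e q.2 a)) ^ t := by
    intro k hk
    refine (hρ.meas (Z := Y × Ω) (fun q a => k q.1 (e q.2 a)) ?_).pow_const t
    refine hk.comp ((measurable_fst.comp measurable_fst).prodMk ?_)
    exact he.comp ((measurable_snd.comp measurable_fst).prodMk measurable_snd)
  rw [lintegral_lintegral_swap (f := fun y ω => ρ (fun a => G.star J f y (e ω a)) ^ t)
      (hcomp _ (G.measurable_smax_uncurry J hf)).aemeasurable,
    lintegral_lintegral_swap (f := fun y ω => ρ (fun a => f y (e ω a)) ^ t) (hcomp _ hf).aemeasurable, ← lintegral_const_mul]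
  · refine lintegral_mono fun ω => ?_
    have hfω : Measurable (Function.uncurry fun y a => f y (e ω a)) :=
      hf.comp (measurable_fst.prodMk (he.comp (measurable_const.prodMk measurable_snd)))
    exact hC Y μ G J (fun y a => f y (e ω a)) hfω
  · exact (hcomp _ hf).lintegral_prod_left' (μ := μ)

end

/-! ### The dyadic maximal function on ℝ -/

section

/-- The shift, in units of `2 ^ k / 3`, of the intervals of length `2 ^ k`: zero for the first grid, and
alternately `1` and `-1` for the second one. The alternation is what makes the shifted intervals nested. -/
def dshift (b : Bool) (k : ℤ) : ℤ := if b then (k.negOnePow : ℤ) else 0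

/-- The index `m` of the interval `2 ^ k * [m + θ, m + θ + 1)` containing `x`, with `θ = dshift b k / 3`. -/
def dix (b : Bool) (k : ℤ) (x : ℝ) : ℤ := ⌊x / 2 ^ k - dshift b k / 3⌋

lemma measurable_dix (b : Bool) (k : ℤ) : Measurable (dix b k) :=
  Int.measurable_floor.comp ((measurable_id.div_const _).sub_const _)

lemma dix_succ (b : Bool) (k : ℤ) (x : ℝ) :
    dix b (k + 1) x = (dix b k x + dshift b k) / 2 := by
  have hs : dshift b (k + 1) = -dshift b k := by
    unfold dshift; cases b <;> simp [Int.negOnePow_succ]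
  unfold dix
  have h2 : ((2 : ℕ) : ℤ) = 2 := rfl
  rw [hs, ← h2, ← Int.floor_add_intCast, ← Int.floor_div_natCast]
  congr 1
  rw [zpow_add_one₀ two_ne_zero]
  have : (2 : ℝ) ^ k ≠ 0 := by positivity
  push_cast
  field_simp
  ring

lemma dix_preimage (b : Bool) (k m : ℤ) : dix b k ⁻¹' {m} =
    Ico ((2 : ℝ) ^ k * (m + dshift b k / 3)) (2 ^ k * (m + dshift b k / 3) + 2 ^ k) := by
  have h2 : (0 : ℝ) < 2 ^ k := by positivity
  ext x
  simp only [mem_preimage, mem_singleton_iff, dix, Int.floor_eq_iff, mem_Ico]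
  refine and_congr ?_ ?_
  · rw [le_sub_iff_add_le, le_div_iff₀ h2, mul_comm]
  · rw [sub_lt_iff_lt_add, div_lt_iff₀ h2]
    constructor <;> intro h <;> linarith

lemma volume_dix (b : Bool) (k m : ℤ) :
    volume (dix b k ⁻¹' {m}) = ENNReal.ofReal (2 ^ k) := by
  rw [dix_preimage, Real.volume_Ico]; congr 1; ring

/-- The average of `h` over the interval of length `2 ^ k` of the grid `b` containing `x`. -/
def dav (b : Bool) (k : ℤ) (h : ℝ → ℝ≥0∞) (x : ℝ) : ℝ≥0∞ :=
  (ENNReal.ofReal (2 ^ k))⁻¹ * ∫⁻ y in dix b k ⁻¹' {dix b k x}, h y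

variable {α : Type} [MeasurableSpace α] {ρ : (α → ℝ≥0∞) → ℝ≥0∞}

lemma measurable_dav (b : Bool) (k : ℤ) {f : ℝ → α → ℝ≥0∞}
    (hf : Measurable (Function.uncurry f)) :
    Measurable fun q : ℝ × α => dav b k (fun y => f y q.2) q.1 := by
  have h1 : ∀ m : ℤ, Measurable fun a => ∫⁻ y in dix b k ⁻¹' {m}, f y a := fun m =>
    Measurable.lintegral_prod_left' (f := Function.uncurry f) hf
  have h2 : Measurable fun q : ℤ × α => ∫⁻ y in dix b k ⁻¹' {q.1}, f y q.2 :=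
    measurable_from_prod_countable_right h1
  have hc : Measurable fun q : ℝ × α => dix b k q.1 := (measurable_dix b k).comp measurable_fst
  exact (h2.comp (hc.prodMk measurable_snd)).const_mul _

lemma dav_mono (b : Bool) (k : ℤ) {g h : ℝ → ℝ≥0∞} (hgh : ∀ y, g y ≤ h y) (x : ℝ) :
    dav b k g x ≤ dav b k h x := mul_le_mul_right (lintegral_mono hgh) _

/-- The dyadic subintervals of one interval of length `2 ^ K`, as a `Grid` for the Lebesgue measure
restricted to that interval. Restricting makes the measure finite. -/
def dgrid (b : Bool) (K m : ℤ) : Grid ((volume : Measure ℝ).restrict (dix b K ⁻¹' {m})) where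
  c j := dix b (K - j)
  meas j := measurable_dix b _
  nested j x y h := by
    have := dix_succ b (K - (j + 1 : ℕ))
    rw [show K - ((j + 1 : ℕ) : ℤ) + 1 = K - j by push_cast; ring] at this
    rw [this, this, h]
  doubling j x := by
    have hs : ∀ i : ℕ, ∀ y z, dix b (K - i) y = dix b (K - i) z → dix b K y = dix b K z := by
      intro i
      induction i with
      | zero => simp
      | succ i ih =>
        intro y z h
        refine ih y z ?_
        have := dix_succ b (K - (i + 1 : ℕ))
        rw [show K - ((i + 1 : ℕ) : ℤ) + 1 = K - i by push_cast; ring] at this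
        rw [this, this, h]
    have hm : ∀ i : ℕ, MeasurableSet (dix b (K - i) ⁻¹' {dix b (K - i) x}) := fun i =>
      measurable_dix b _ (measurableSet_singleton _)
    rw [Measure.restrict_apply (hm j), Measure.restrict_apply (hm (j + 1))]
    by_cases hx : dix b K x = m
    · have hin : ∀ i : ℕ, dix b (K - i) ⁻¹' {dix b (K - i) x} ∩ dix b K ⁻¹' {m} =
          dix b (K - i) ⁻¹' {dix b (K - i) x} := fun i =>
        inter_eq_self_of_subset_left fun y hy => (hs i y x hy).trans hx
      rw [hin, hin, volume_dix, volume_dix, ← ENNReal.ofReal_ofNat, ← ENNReal.ofReal_mul (by simp)]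
      refine ENNReal.ofReal_le_ofReal (le_of_eq ?_)
      rw [show K - (j : ℤ) = K - ((j + 1 : ℕ) : ℤ) + 1 by push_cast; ring,
        zpow_add_one₀ two_ne_zero]
      ring
    · have : dix b (K - j) ⁻¹' {dix b (K - j) x} ∩ dix b K ⁻¹' {m} = ∅ := by
        ext y
        simp only [mem_inter_iff, mem_preimage, mem_singleton_iff, mem_empty_iff_false, iff_false,
          not_and]
        intro hy hym
        exact hx ((hs j x y hy.symm).trans hym)
      rw [this]; simp

lemma dix_of_sub (b : Bool) (K : ℤ) (i : ℕ) {y z : ℝ} (h : dix b (K - i) y = dix b (K - i) z) :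
    dix b K y = dix b K z := by
  have := (dgrid b K 0).nested_le (Nat.zero_le i) (x := y) (y := z) h
  simpa [dgrid] using this

lemma dgrid_avg (b : Bool) (K m : ℤ) (j : ℕ) (h : ℝ → ℝ≥0∞) {x : ℝ} (hx : dix b K x = m) :
    (dgrid b K m).avg j h x = dav b (K - j) h x := by
  have hm : MeasurableSet (dix b (K - j) ⁻¹' {dix b (K - j) x}) :=
      measurable_dix b _ (measurableSet_singleton _)
  have hin : dix b (K - j) ⁻¹' {dix b (K - j) x} ∩ dix b K ⁻¹' {m} =
      dix b (K - j) ⁻¹' {dix b (K - j) x} :=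
    inter_eq_self_of_subset_left fun y hy => (dix_of_sub b K j hy).trans hx
  unfold Grid.avg dav Grid.cell
  change _ * ∫⁻ y in dix b (K - j) ⁻¹' {dix b (K - j) x}, h y ∂_ = _
  change ((Measure.restrict _ _) (dix b (K - j) ⁻¹' {dix b (K - j) x}))⁻¹ * _ = _
  rw [Measure.restrict_apply hm, Measure.restrict_restrict hm, hin, volume_dix]

instance (b : Bool) (K m : ℤ) :
    IsFiniteMeasure ((volume : Measure ℝ).restrict (dix b K ⁻¹' {m})) := by
  refine ⟨?_⟩
  rw [Measure.restrict_apply_univ, volume_dix]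
  exact ENNReal.ofReal_lt_top

/-- The dyadic maximal function of the grid `b`, restricted to intervals of length `2 ^ k` with `|k| ≤ N`. -/
def dmaxN (b : Bool) (N : ℕ) (h : ℝ → ℝ≥0∞) (x : ℝ) : ℝ≥0∞ :=
  ⨆ (k : ℤ) (_ : |k| ≤ N), dav b k h x

/-- The 1-D dyadic maximal function, adding the contributions of the two grids. -/
def dmax (h : ℝ → ℝ≥0∞) (x : ℝ) : ℝ≥0∞ := (⨆ N, dmaxN false N h x) + ⨆ N, dmaxN true N h x

lemma measurable_dmaxN (b : Bool) (N : ℕ) {f : ℝ → α → ℝ≥0∞}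
    (hf : Measurable (Function.uncurry f)) :
    Measurable fun q : ℝ × α => dmaxN b N (fun y => f y q.2) q.1 :=
  Measurable.iSup fun k => Measurable.iSup_Prop _ (measurable_dav b k hf)

lemma measurable_dmax {f : ℝ → α → ℝ≥0∞} (hf : Measurable (Function.uncurry f)) :
    Measurable fun q : ℝ × α => dmax (fun y => f y q.2) q.1 :=
  (Measurable.iSup fun N => measurable_dmaxN false N hf).add
    (Measurable.iSup fun N => measurable_dmaxN true N hf)

lemma measurable_param {β γ : Type} [MeasurableSpace β] [MeasurableSpace γ] {F : β → α → γ}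
    (h : Measurable fun q : β × α => F q.1 q.2) (z : β) : Measurable fun a => F z a := by
  have h2 : Measurable (fun a : α => (z, a)) := measurable_prodMk_left
  have h3 := Measurable.comp h h2
  exact h3

lemma dmax_mono {g h : ℝ → ℝ≥0∞} (hgh : ∀ y, g y ≤ h y) (x : ℝ) : dmax g x ≤ dmax h x :=
  add_le_add (iSup_mono fun _ => iSup₂_mono fun _ _ => dav_mono _ _ hgh x)
    (iSup_mono fun _ => iSup₂_mono fun _ _ => dav_mono _ _ hgh x)

lemma dav_le_dmax (b : Bool) (k : ℤ) (h : ℝ → ℝ≥0∞) (x : ℝ) : dav b k h x ≤ dmax h x := by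
  have h1 : dav b k h x ≤ ⨆ N, dmaxN b N h x :=
    (le_iSup₂ (f := fun (i : ℤ) (_ : |i| ≤ (k.natAbs : ℕ)) => dav b i h x) k (by simp)).trans
      (le_iSup (fun N => dmaxN b N h x) k.natAbs)
  cases b
  · exact h1.trans le_self_add
  · exact h1.trans le_add_self

lemma lintegral_dix (b : Bool) (K : ℤ) (h : ℝ → ℝ≥0∞) :
    ∫⁻ x, h x = ∑' m : ℤ, ∫⁻ x in dix b K ⁻¹' {m}, h x := by
  rw [← lintegral_iUnion (fun m => measurable_dix b K (measurableSet_singleton m)),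
    ← preimage_iUnion, iUnion_of_singleton, preimage_univ, Measure.restrict_univ]
  intro i j hij
  exact Disjoint.preimage _ (by simpa using hij)

lemma lintegral_dmaxN_le (hρ : LatNorm ρ) {s : ℝ} (hs : 0 < s) {C : ℝ≥0} (hC : HLBound ρ s C)
    (b : Bool) (N : ℕ) {f : ℝ → α → ℝ≥0∞} (hf : Measurable (Function.uncurry f)) :
    ∫⁻ x, ρ (fun a => dmaxN b N (fun y => f y a) x) ^ s ≤ C * ∫⁻ x, ρ (f x) ^ s := by
  rw [lintegral_dix b N, lintegral_dix b N (fun x => ρ (f x) ^ s), ← ENNReal.tsum_mul_left]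
  refine ENNReal.tsum_le_tsum fun m => ?_
  refine le_trans ?_ (hC ℝ _ (dgrid b N m) (2 * N) f hf)
  refine setLIntegral_mono' (measurable_dix b N (measurableSet_singleton m)) fun x hx => ?_
  refine ENNReal.rpow_le_rpow (hρ.mono _ _ fun a => ?_) hs.le
  refine iSup₂_le fun k hk => ?_
  rw [abs_le] at hk
  have h1 : (N : ℤ) - ((N - k).toNat : ℕ) = k := by lia
  have h2 : (N - k).toNat ≤ 2 * N := by lia
  have := (dgrid b N m).avg_le_smax h2 (fun y => f y a) x
  rwa [dgrid_avg b N m _ _ hx, h1] at this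

lemma lintegral_iSup_dmaxN_le (hρ : LatNorm ρ) {s : ℝ} (hs : 0 < s) {C : ℝ≥0}
    (hC : HLBound ρ s C) (b : Bool) {f : ℝ → α → ℝ≥0∞} (hf : Measurable (Function.uncurry f)) :
    ∫⁻ x, ρ (fun a => ⨆ N, dmaxN b N (fun y => f y a) x) ^ s ≤ C * ∫⁻ x, ρ (f x) ^ s := by
  have hmono : ∀ (h : ℝ → ℝ≥0∞) (x : ℝ), Monotone fun N => dmaxN b N h x := by
    intro h x M N hMN
    refine iSup₂_le fun k hk => ?_
    exact le_iSup₂ (f := fun (i : ℤ) (_ : |i| ≤ N) => dav b i h x) k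
      (hk.trans (by exact_mod_cast hMN))
  calc _ ≤ ∫⁻ x, ⨆ N, ρ (fun a => dmaxN b N (fun y => f y a) x) ^ s := by
        refine lintegral_mono fun x => ?_
        dsimp only
        rw [← rpow_iSup _ hs]
        refine ENNReal.rpow_le_rpow ?_ hs.le
        exact hρ.iSup_le (fun N a => dmaxN b N (fun y => f y a) x)
          (fun N => measurable_param (F := fun x a => dmaxN b N (fun y => f y a) x)
            (measurable_dmaxN b N hf) x)
          fun M N hMN a => hmono _ x hMN
    _ = ⨆ N, ∫⁻ x, ρ (fun a => dmaxN b N (fun y => f y a) x) ^ s := by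
        refine lintegral_iSup (fun N => ?_) fun M N hMN x => ?_
        · exact (hρ.meas (fun x a => dmaxN b N (fun y => f y a) x)
            (measurable_dmaxN b N hf)).pow_const s
        · exact ENNReal.rpow_le_rpow (hρ.mono _ _ fun a => hmono _ x hMN) hs.le
    _ ≤ _ := iSup_le fun N => lintegral_dmaxN_le hρ hs hC b N hf

/-- The dyadic maximal operator of the line is bounded on `L^s(ρ)` for every `s > 1`: the line is cut into
intervals of length `2 ^ N`, on each of which `HL` applies with the same constant, and then `N → ∞`. -/
lemma lintegral_dmax_le (hρ : LatNorm ρ) (hH : HL ρ) {s : ℝ} (hs : 1 < s) :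
    ∃ C : ℝ≥0, ∀ f : ℝ → α → ℝ≥0∞, Measurable (Function.uncurry f) →
      ∫⁻ x, ρ (fun a => dmax (fun y => f y a) x) ^ s ≤ C * ∫⁻ x, ρ (f x) ^ s := by
  obtain ⟨C, hC⟩ := hH s hs
  have hs0 : 0 < s := by linarith
  refine ⟨2 ^ (s - 1) * (2 * C), fun f hf => ?_⟩
  have hm : ∀ b, Measurable fun q : ℝ × α => ⨆ N, dmaxN b N (fun y => f y q.2) q.1 := fun b =>
    Measurable.iSup fun N => measurable_dmaxN b N hf
  have hρm : ∀ b, Measurable fun x => ρ (fun a => ⨆ N, dmaxN b N (fun y => f y a) x) ^ s :=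
    fun b => (hρ.meas (fun x a => ⨆ N, dmaxN b N (fun y => f y a) x) (hm b)).pow_const s
  calc _ ≤ ∫⁻ x, 2 ^ (s - 1) * (ρ (fun a => ⨆ N, dmaxN false N (fun y => f y a) x) ^ s +
          ρ (fun a => ⨆ N, dmaxN true N (fun y => f y a) x) ^ s) := by
        refine lintegral_mono fun x => ?_
        refine le_trans (ENNReal.rpow_le_rpow ?_ hs0.le)
          (ENNReal.rpow_add_le_mul_rpow_add_rpow _ _ hs.le)
        have hp : ∀ b, Measurable fun a => ⨆ N, dmaxN b N (fun y => f y a) x := fun b =>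
          measurable_param (F := fun x a => ⨆ N, dmaxN b N (fun y => f y a) x) (hm b) x
        exact hρ.add_le _ _ (hp false) (hp true)
    _ = 2 ^ (s - 1) * ((∫⁻ x, ρ (fun a => ⨆ N, dmaxN false N (fun y => f y a) x) ^ s) +
          ∫⁻ x, ρ (fun a => ⨆ N, dmaxN true N (fun y => f y a) x) ^ s) := by
        rw [← lintegral_add_left (hρm false)]
        exact lintegral_const_mul _ ((hρm false).add (hρm true))
    _ ≤ 2 ^ (s - 1) * (C * (∫⁻ x, ρ (f x) ^ s) + C * ∫⁻ x, ρ (f x) ^ s) := by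
        gcongr
        · exact lintegral_iSup_dmaxN_le hρ hs0 hC false hf
        · exact lintegral_iSup_dmaxN_le hρ hs0 hC true hf
    _ = _ := by
        push_cast
        rw [ENNReal.coe_rpow_of_nonneg _ (by linarith)]
        push_cast
        ring

/-- The one-third trick: an interval shorter than `2 ^ k / 3` lies in a single interval of length `2 ^ k`
of one of the two grids, because the endpoints of the two grids are at distance at least `2 ^ k / 3`. -/
lemma exists_dix_eq {A B : ℝ} (k : ℤ) (hAB : A ≤ B) (h : B - A < 2 ^ k / 3) :
    ∃ b, dix b k A = dix b k B := by
  by_contra! hne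
  have h2 : (0 : ℝ) < 2 ^ k := by positivity
  set a := A / 2 ^ k with ha
  set c := B / 2 ^ k with hc
  have hac : a ≤ c := by rw [ha, hc]; gcongr
  have hlt : c - a < 1 / 3 := by
    rw [ha, hc, ← _root_.sub_div, div_lt_iff₀ h2]; linarith
  have key : ∀ θ : ℝ, ⌊a - θ⌋ ≠ ⌊c - θ⌋ → a - θ < ⌊c - θ⌋ ∧ (⌊c - θ⌋ : ℝ) ≤ c - θ := by
    intro θ hθ
    refine ⟨?_, Int.floor_le _⟩
    have : ⌊a - θ⌋ < ⌊c - θ⌋ := lt_of_le_of_ne (Int.floor_mono (by linarith)) hθ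
    exact Int.floor_lt.1 this
  obtain ⟨h1, h1'⟩ := key 0 (by simpa [dix, dshift] using hne false)
  obtain ⟨h3, h3'⟩ := key (((k.negOnePow : ℤ) : ℝ) / 3) (by simpa [dix, dshift] using hne true)
  set m := ⌊c - 0⌋
  set m' := ⌊c - ((k.negOnePow : ℤ) : ℝ) / 3⌋
  have he : (k.negOnePow : ℤ) = 1 ∨ (k.negOnePow : ℤ) = -1 := Int.isUnit_iff.1 (k.negOnePow.isUnit)
  set e : ℤ := (k.negOnePow : ℤ)
  have hu : (3 * (m - m') - e : ℝ) < 1 := by linarith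
  have hl : (-1 : ℝ) < 3 * (m - m') - e := by linarith
  have hu' : 3 * (m - m') - e < 1 := by exact_mod_cast hu
  have hl' : -1 < 3 * (m - m') - e := by exact_mod_cast hl
  lia

lemma dix_mono (b : Bool) (k : ℤ) : Monotone (dix b k) := fun x y hxy =>
  Int.floor_mono (by gcongr)

/-- Averages over arbitrary intervals are at most `6` times the dyadic maximal function: an interval of
length `2 * r` lies in a grid interval of length at most `12 * r`. -/
lemma setLIntegral_Icc_le_dmax (h : ℝ → ℝ≥0∞) {c r x : ℝ} (hr : 0 < r)
    (hx : x ∈ Icc (c - r) (c + r)) :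
    ∫⁻ t in Icc (c - r) (c + r), h t ≤ 6 * ENNReal.ofReal (2 * r) * dmax h x := by
  obtain ⟨n, hn1, hn2⟩ := exists_mem_Ico_zpow (show 0 < 6 * r by linarith) (one_lt_two (α := ℝ))
  obtain ⟨b, hb⟩ := exists_dix_eq (A := c - r) (B := c + r) (n + 1) (by linarith) (by linarith)
  have hsub : Icc (c - r) (c + r) ⊆ dix b (n + 1) ⁻¹' {dix b (n + 1) x} := by
    have key : ∀ y ∈ Icc (c - r) (c + r), dix b (n + 1) y = dix b (n + 1) (c + r) := fun y hy =>
      le_antisymm (dix_mono b _ hy.2) (hb ▸ dix_mono b _ hy.1)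
    intro y hy
    exact (key y hy).trans (key x hx).symm
  have h2 : (0 : ℝ) < 2 ^ (n + 1) := by positivity
  have hv0 : ENNReal.ofReal (2 ^ (n + 1)) ≠ 0 := by simpa using h2
  have hle : ENNReal.ofReal (2 ^ (n + 1)) ≤ 6 * ENNReal.ofReal (2 * r) := by
    rw [← ENNReal.ofReal_ofNat, ← ENNReal.ofReal_mul (by simp)]
    refine ENNReal.ofReal_le_ofReal ?_
    rw [zpow_add_one₀ two_ne_zero]
    linarith
  calc _ ≤ ∫⁻ t in dix b (n + 1) ⁻¹' {dix b (n + 1) x}, h t := lintegral_mono_set hsub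
    _ = ENNReal.ofReal (2 ^ (n + 1)) * dav b (n + 1) h x := by
        unfold dav
        rw [← mul_assoc, ENNReal.mul_inv_cancel hv0 ENNReal.ofReal_ne_top, one_mul]
    _ ≤ _ := mul_le_mul' hle (dav_le_dmax b _ h x)

end

/-! ### Mixed norms and the iterated maximal operator -/

section

/-- The norm of `L^p(ℓ^v)`, the mixed Lebesgue space of sequence-valued functions, built by iterating
`extNorm`: first the `ℓ^v` norm (the `L^v` norm of the counting measure), then the variables
`x 1, …, x n` in this order. -/
def vnorm (v : ℝ) : (n : ℕ) → (Fin n → ℝ≥0∞) → (ℕ × (Fin n → ℝ) → ℝ≥0∞) → ℝ≥0∞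
  | 0, _ => extNorm (fun f : Unit → ℝ≥0∞ => f ()) (Measure.count : Measure ℕ)
      (fun j _ => (j, finZeroElim)) v
  | (n + 1), p => extNorm (vnorm v n fun i => p i.castSucc) (volume : Measure ℝ)
      (fun t q => (q.1, (Fin.snoc q.2 t : Fin (n + 1) → ℝ))) (p (Fin.last n)).toReal

lemma measurable_snoc (n : ℕ) :
    Measurable fun q : (Fin n → ℝ) × ℝ => (Fin.snoc q.1 q.2 : Fin (n + 1) → ℝ) := by
  refine measurable_pi_iff.2 fun i => ?_
  induction i using Fin.lastCases with
  | last => simpa only [Fin.snoc_last] using measurable_snd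
  | cast i =>
    simp only [Fin.snoc_castSucc]
    exact (measurable_pi_apply i).comp measurable_fst

lemma measurable_finInit (n : ℕ) : Measurable fun x : Fin (n + 1) → ℝ => (Fin.init x : Fin n → ℝ) :=
  measurable_pi_iff.2 fun _ => measurable_pi_apply _

lemma one_lt_toReal {a : ℝ≥0∞} (h : 1 < a ∧ a < ∞) : 1 < a.toReal := by
  rw [← ENNReal.toReal_one]
  exact (ENNReal.toReal_lt_toReal (by simp) h.2.ne).2 h.1

lemma measurable_snoc_snd (n : ℕ) : Measurable (Function.uncurry
    fun (t : ℝ) (q : ℕ × (Fin n → ℝ)) => (q.1, (Fin.snoc q.2 t : Fin (n + 1) → ℝ))) :=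
  (measurable_fst.comp measurable_snd).prodMk
    ((measurable_snoc n).comp ((measurable_snd.comp measurable_snd).prodMk measurable_fst))

/-- All the norms of `L^p(ℓ^v)` have the maximal property `HL`, by induction on the number of variables. -/
lemma vnorm_spec {v : ℝ} (hv : 1 < v) : ∀ (n : ℕ) (p : Fin n → ℝ≥0∞),
    (∀ i, 1 < p i ∧ p i < ∞) → LatNorm (vnorm v n p) ∧ HL (vnorm v n p)
  | 0, p, _ => by
    have he : Measurable (Function.uncurry fun (j : ℕ) (_ : Unit) =>
        (j, (finZeroElim : Fin 0 → ℝ))) := measurable_fst.prodMk measurable_const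
    exact ⟨latNorm_eval.ext _ he hv, hl_eval.ext latNorm_eval _ he hv⟩
  | (n + 1), p, hp => by
    obtain ⟨h1, h2⟩ := vnorm_spec hv n (fun i => p i.castSucc) fun i => hp _
    have ht := one_lt_toReal (hp (Fin.last n))
    exact ⟨h1.ext _ (measurable_snoc_snd n) ht, h2.ext h1 _ (measurable_snoc_snd n) ht⟩

lemma vnorm_eq (v : ℝ) : ∀ (n : ℕ) (p : Fin n → ℝ≥0∞), (∀ i, 1 < p i ∧ p i < ∞) →
    ∀ f : ℕ × (Fin n → ℝ) → ℝ≥0∞,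
      vnorm v n p f = mixedNorm n p fun x => (∑' j, f (j, x) ^ v) ^ (1 / v)
  | 0, p, _, f => by simp [vnorm, mixedNorm, extNorm, lintegral_count]
  | (n + 1), p, hp, f => by
    simp only [vnorm, mixedNorm, extNorm, lpNormE, if_neg (hp (Fin.last n)).2.ne]
    congr 1
    refine lintegral_congr fun t => ?_
    rw [vnorm_eq v n _ (fun i => hp _)]

/-- The strong dyadic maximal operator: the one-dimensional operator `dmax` applied successively in the
variables `x 1, …, x n`. -/
def iterMax : (n : ℕ) → ((Fin n → ℝ) → ℝ≥0∞) → (Fin n → ℝ) → ℝ≥0∞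
  | 0, g, x => g x
  | (n + 1), g, x => dmax (fun t => iterMax n (fun y => g (Fin.snoc y t)) (Fin.init x))
      (x (Fin.last n))

lemma measurable_iterMax : ∀ (n : ℕ) {Z : Type} [MeasurableSpace Z]
    {g : Z → (Fin n → ℝ) → ℝ≥0∞}, Measurable (Function.uncurry g) →
    Measurable fun q : Z × (Fin n → ℝ) => iterMax n (g q.1) q.2
  | 0, Z, _, g, hg => hg
  | (n + 1), Z, _, g, hg => by
    have h1 : Measurable (Function.uncurry fun (q : ℝ × Z) (y : Fin n → ℝ) =>
        g q.2 (Fin.snoc y q.1)) :=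
      hg.comp ((measurable_snd.comp measurable_fst).prodMk ((measurable_snoc n).comp
        (measurable_snd.prodMk (measurable_fst.comp measurable_fst))))
    have h2 := measurable_iterMax n h1
    have e3 : Measurable fun q : ℝ × Z × (Fin n → ℝ) => ((q.1, q.2.1), q.2.2) :=
      (measurable_fst.prodMk (measurable_fst.comp measurable_snd)).prodMk
        (measurable_snd.comp measurable_snd)
    have h3 : Measurable (Function.uncurry fun (t : ℝ) (a : Z × (Fin n → ℝ)) =>
        iterMax n (fun y => g a.1 (Fin.snoc y t)) a.2) := by
      have := h2.comp e3
      exact this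
    have h4 := measurable_dmax h3
    have e5 : Measurable fun q : Z × (Fin (n + 1) → ℝ) =>
        (q.2 (Fin.last n), (q.1, (Fin.init q.2 : Fin n → ℝ))) :=
      ((measurable_pi_apply (Fin.last n)).comp measurable_snd).prodMk
        (measurable_fst.prodMk ((measurable_finInit n).comp measurable_snd))
    have h5 := h4.comp e5
    simp only [iterMax]
    exact h5

/-- The Fefferman–Stein inequality on mixed Lebesgue spaces for the iterated maximal operator. In the last
variable it is `lintegral_dmax_le` for the norm of the other variables; for those one uses induction on
each slice. -/
lemma vnorm_iterMax_le {v : ℝ} (hv : 1 < v) : ∀ (n : ℕ) (p : Fin n → ℝ≥0∞),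
    (∀ i, 1 < p i ∧ p i < ∞) → ∃ C : ℝ≥0, ∀ f : ℕ × (Fin n → ℝ) → ℝ≥0∞, Measurable f →
      vnorm v n p (fun q => iterMax n (fun x => f (q.1, x)) q.2) ≤ C * vnorm v n p f
  | 0, p, _ => ⟨1, fun f _ => by simp [iterMax]⟩
  | (n + 1), p, hp => by
    obtain ⟨C, hC⟩ := vnorm_iterMax_le hv n (fun i => p i.castSucc) fun i => hp _
    obtain ⟨h1, h2⟩ := vnorm_spec hv n (fun i => p i.castSucc) fun i => hp _
    set s := (p (Fin.last n)).toReal with hs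
    have hs1 : 1 < s := one_lt_toReal (hp (Fin.last n))
    have hs0 : 0 < s := by linarith
    obtain ⟨D, hD⟩ := lintegral_dmax_le h1 h2 hs1
    set ρ := vnorm v n fun i => p i.castSucc with hρ
    refine ⟨D ^ (1 / s) * C, fun f hf => ?_⟩
    have hfs : ∀ t : ℝ, Measurable fun q : ℕ × (Fin n → ℝ) =>
        f (q.1, (Fin.snoc q.2 t : Fin (n + 1) → ℝ)) := fun t =>
      hf.comp (measurable_fst.prodMk ((measurable_snoc n).comp
        (measurable_snd.prodMk measurable_const)))
    set G : ℝ → ℕ × (Fin n → ℝ) → ℝ≥0∞ := fun t q =>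
      iterMax n (fun y => f (q.1, (Fin.snoc y t : Fin (n + 1) → ℝ))) q.2 with hG
    have hGm : Measurable (Function.uncurry G) := by
      have h3 : Measurable (Function.uncurry fun (q : ℝ × ℕ) (y : Fin n → ℝ) =>
          f (q.2, (Fin.snoc y q.1 : Fin (n + 1) → ℝ))) :=
        hf.comp ((measurable_snd.comp measurable_fst).prodMk ((measurable_snoc n).comp
          (measurable_snd.prodMk (measurable_fst.comp measurable_fst))))
      exact (measurable_iterMax n h3).comp
        ((measurable_fst.prodMk (measurable_fst.comp measurable_snd)).prodMk
          (measurable_snd.comp measurable_snd))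
    have hρf : Measurable fun t : ℝ =>
        ρ (fun q => f (q.1, (Fin.snoc q.2 t : Fin (n + 1) → ℝ))) ^ s :=
      (h1.meas (fun (t : ℝ) q => f (q.1, (Fin.snoc q.2 t : Fin (n + 1) → ℝ)))
        (hf.comp (measurable_snoc_snd n))).pow_const s
    have hmain : ∫⁻ t, ρ (fun q => dmax (fun y => G y q) t) ^ s ≤
        D * (C ^ s * ∫⁻ t, ρ (fun q => f (q.1, (Fin.snoc q.2 t : Fin (n + 1) → ℝ))) ^ s) := by
      refine (hD G hGm).trans (mul_le_mul_right ?_ _)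
      rw [← lintegral_const_mul _ hρf]
      refine lintegral_mono fun t => ?_
      rw [← ENNReal.mul_rpow_of_nonneg _ _ hs0.le]
      exact ENNReal.rpow_le_rpow (hC _ (hfs t)) hs0.le
    have hL : vnorm v (n + 1) p (fun q => iterMax (n + 1) (fun x => f (q.1, x)) q.2) =
        (∫⁻ t, ρ (fun q => dmax (fun y => G y q) t) ^ s) ^ (1 / s) := by
      simp only [vnorm, extNorm, iterMax, Fin.init_snoc, Fin.snoc_last]
      rfl
    have hR : vnorm v (n + 1) p f =
        (∫⁻ t, ρ (fun q => f (q.1, (Fin.snoc q.2 t : Fin (n + 1) → ℝ))) ^ s) ^ (1 / s) := rfl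
    rw [hL, hR]
    refine (ENNReal.rpow_le_rpow hmain (by positivity)).trans (le_of_eq ?_)
    rw [ENNReal.mul_rpow_of_nonneg _ _ (by positivity),
      ENNReal.mul_rpow_of_nonneg _ _ (by positivity), ← ENNReal.rpow_mul,
      mul_one_div_cancel hs0.ne', ENNReal.rpow_one, ENNReal.coe_mul,
      ENNReal.coe_rpow_of_nonneg _ (by positivity), mul_assoc]

lemma lintegral_snoc (n : ℕ) {F : (Fin (n + 1) → ℝ) → ℝ≥0∞} (hF : Measurable F) :
    ∫⁻ x, F x = ∫⁻ t : ℝ, ∫⁻ y : Fin n → ℝ, F (Fin.snoc y t) := by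
  have h := (volume_preserving_piFinSuccAbove (fun _ : Fin (n + 1) => ℝ) (Fin.last n)).symm
  rw [← h.lintegral_comp hF, Measure.volume_eq_prod, lintegral_prod]
  · refine lintegral_congr fun t => lintegral_congr fun y => ?_
    congr 1
    exact Fin.insertNth_last (α := fun _ => ℝ) t y
  · exact (hF.comp h.measurable).aemeasurable

lemma cubeAt_eq {n : ℕ} (c : Fin n → ℝ) (r : ℝ) :
    cubeAt c r = Icc (fun i => c i - r) (fun i => c i + r) := by
  ext x
  simp only [cubeAt, mem_ofPred_eq, mem_Icc, Pi.le_def, abs_le, ← forall_and]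
  refine forall_congr' fun i => and_congr ?_ ?_ <;> constructor <;> intro h <;> linarith

lemma measurableSet_cubeAt {n : ℕ} (c : Fin n → ℝ) (r : ℝ) : MeasurableSet (cubeAt c r) := by
  rw [cubeAt_eq]; exact measurableSet_Icc

lemma volume_cubeAt {n : ℕ} (c : Fin n → ℝ) (r : ℝ) :
    volume (cubeAt c r) = ENNReal.ofReal (2 * r) ^ n := by
  rw [cubeAt_eq, Real.volume_Icc_pi]
  have : ∀ i, c i + r - (c i - r) = 2 * r := fun i => by ring
  simp [this]

lemma snoc_mem_cubeAt {n : ℕ} {c : Fin (n + 1) → ℝ} {r : ℝ} {y : Fin n → ℝ} {t : ℝ} :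
    (Fin.snoc y t : Fin (n + 1) → ℝ) ∈ cubeAt c r ↔
      y ∈ cubeAt (Fin.init c) r ∧ t ∈ Icc (c (Fin.last n) - r) (c (Fin.last n) + r) := by
  have : ∀ a b : ℝ, |a - b| ≤ r ↔ a ∈ Icc (b - r) (b + r) := fun a b => by
    rw [abs_le, mem_Icc]
    refine and_congr ?_ ?_ <;> constructor <;> intro h <;> linarith
  simp only [cubeAt, mem_ofPred_eq, Fin.forall_fin_succ', Fin.snoc_castSucc, Fin.snoc_last,
    Fin.init, this]

lemma setLIntegral_cube_le_iterMax : ∀ (n : ℕ) {g : (Fin n → ℝ) → ℝ≥0∞}, Measurable g →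
    ∀ {c x : Fin n → ℝ} {r : ℝ}, 0 < r → x ∈ cubeAt c r →
      ∫⁻ y in cubeAt c r, g y ≤ (6 * ENNReal.ofReal (2 * r)) ^ n * iterMax n g x
  | 0, g, hg, c, x, r, hr, hx => by
    have h1 : ∫⁻ y in cubeAt c r, g y ≤ ∫⁻ y, g y := setLIntegral_le_lintegral _ _
    have h2 : ∫⁻ y, g y = g x := by
      rw [lintegral_unique, volume_pi, Measure.pi_of_empty (fun _ => volume) x]
      simp
      exact congrArg g (Subsingleton.elim _ _)
    simpa [iterMax] using h1.trans h2.le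
  | (n + 1), g, hg, c, x, r, hr, hx => by
    have hgs : ∀ t : ℝ, Measurable fun y : Fin n → ℝ => g (Fin.snoc y t) := fun t =>
      hg.comp ((measurable_snoc n).comp (measurable_id.prodMk measurable_const))
    have hx' : Fin.init x ∈ cubeAt (Fin.init c) r ∧
        x (Fin.last n) ∈ Icc (c (Fin.last n) - r) (c (Fin.last n) + r) := by
      rw [← Fin.snoc_init_self x] at hx
      exact snoc_mem_cubeAt.1 hx
    set κ := 6 * ENNReal.ofReal (2 * r) with hκ
    set H : ℝ → ℝ≥0∞ := fun t => iterMax n (fun y => g (Fin.snoc y t)) (Fin.init x) with hH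
    calc ∫⁻ y in cubeAt c r, g y
        = ∫⁻ t in Icc (c (Fin.last n) - r) (c (Fin.last n) + r),
            ∫⁻ y in cubeAt (Fin.init c) r, g (Fin.snoc y t) := by
          rw [← lintegral_indicator (measurableSet_cubeAt c r),
            lintegral_snoc n (hg.indicator (measurableSet_cubeAt c r)),
            ← lintegral_indicator measurableSet_Icc]
          refine lintegral_congr fun t => ?_
          by_cases ht : t ∈ Icc (c (Fin.last n) - r) (c (Fin.last n) + r)
          · rw [indicator_of_mem ht, ← lintegral_indicator (measurableSet_cubeAt _ r)]
            refine lintegral_congr fun y => ?_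
            have : (Fin.snoc y t : Fin (n + 1) → ℝ) ∈ cubeAt c r ↔ y ∈ cubeAt (Fin.init c) r :=
              snoc_mem_cubeAt.trans (and_iff_left ht)
            by_cases hy : y ∈ cubeAt (Fin.init c) r
            · exact (indicator_of_mem (this.2 hy) g).trans
                (indicator_of_mem hy fun y => g (Fin.snoc y t)).symm
            · exact (indicator_of_notMem (fun h => hy (this.1 h)) g).trans
                (indicator_of_notMem hy fun y => g (Fin.snoc y t)).symm
          · rw [indicator_of_notMem ht]
            have : ∀ y, (Fin.snoc y t : Fin (n + 1) → ℝ) ∉ cubeAt c r := fun y h =>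
              ht (snoc_mem_cubeAt.1 h).2
            simp [indicator, this]
      _ ≤ ∫⁻ t in Icc (c (Fin.last n) - r) (c (Fin.last n) + r), κ ^ n * H t :=
          lintegral_mono fun t => setLIntegral_cube_le_iterMax n (hgs t) hr hx'.1
      _ = κ ^ n * ∫⁻ t in Icc (c (Fin.last n) - r) (c (Fin.last n) + r), H t :=
          lintegral_const_mul' _ _ (by simp [hκ, ENNReal.mul_ne_top])
      _ ≤ κ ^ n * (κ * dmax H (x (Fin.last n))) :=
          mul_le_mul_right (setLIntegral_Icc_le_dmax H hr hx'.2) _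
      _ = κ ^ (n + 1) * iterMax (n + 1) g x := by
          rw [pow_succ, mul_assoc (κ ^ n)]; rfl

/-- The maximal operator over cubes is dominated by the iterated one. -/
lemma maximalE_le_iterMax {n : ℕ} {g : (Fin n → ℝ) → ℝ≥0∞} (hg : Measurable g)
    (x : Fin n → ℝ) : maximalE g x ≤ 6 ^ n * iterMax n g x := by
  refine iSup_le fun c => iSup_le fun r => iSup_le fun hr => iSup_le fun hx => ?_
  rw [volume_cubeAt]
  have h0 : ENNReal.ofReal (2 * r) ^ n ≠ 0 := pow_ne_zero _ (by simpa using hr)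
  have h1 : ENNReal.ofReal (2 * r) ^ n ≠ ∞ := ENNReal.pow_ne_top ENNReal.ofReal_ne_top
  calc _ ≤ (ENNReal.ofReal (2 * r) ^ n)⁻¹ *
        ((6 * ENNReal.ofReal (2 * r)) ^ n * iterMax n g x) :=
        mul_le_mul_right (setLIntegral_cube_le_iterMax n hg hr hx) _
    _ = ((ENNReal.ofReal (2 * r) ^ n)⁻¹ * ENNReal.ofReal (2 * r) ^ n) *
          (6 ^ n * iterMax n g x) := by rw [mul_pow]; ring
    _ = _ := by rw [ENNReal.inv_mul_cancel h0 h1, one_mul]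

end

/-! ### The local estimate -/

section

/-- The mean value of `g` over the cube `Q(0, R)`. -/
def cubeAvg {n : ℕ} (g : (Fin n → ℝ) → ℝ≥0∞) (R : ℝ) : ℝ≥0∞ :=
  (volume (cube0 n R))⁻¹ * ∫⁻ y in cube0 n R, g y

lemma measurableSet_cube0 (n : ℕ) (r : ℝ) : MeasurableSet (cube0 n r) := measurableSet_cubeAt 0 r

lemma mem_cube0 {n : ℕ} {r : ℝ} {x : Fin n → ℝ} : x ∈ cube0 n r ↔ ∀ i, |x i| ≤ r := by
  simp [cube0, cubeAt]

lemma cube0_mono {n : ℕ} {r s : ℝ} (h : r ≤ s) : cube0 n r ⊆ cube0 n s := fun _ hx =>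
  mem_cube0.2 fun i => (mem_cube0.1 hx i).trans h

lemma mixedNormOn_eq {v : ℝ} (hv : 1 < v) (n : ℕ) (p : Fin n → ℝ≥0∞)
    (hp : ∀ i, 1 < p i ∧ p i < ∞) (f : ℕ × (Fin n → ℝ) → ℝ≥0∞) (S : Set (Fin n → ℝ)) :
    mixedNormOn n p (fun x => (∑' j, f (j, x) ^ v) ^ (1 / v)) S =
      vnorm v n p (fun q => S.indicator (fun x => f (q.1, x)) q.2) := by
  have hv0 : 0 < v := by linarith
  rw [vnorm_eq v n p hp, mixedNormOn]
  congr 1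
  funext x
  by_cases hx : x ∈ S
  · simp [indicator_of_mem hx]
  · simp [indicator_of_notMem hx, hv0]

lemma mixedNorm_cube0 {r : ℝ} (hr : 0 < r) : ∀ (n : ℕ) (p : Fin n → ℝ≥0∞),
    (∀ i, 1 < p i ∧ p i < ∞) → ∀ a : ℝ≥0∞,
      mixedNorm n p ((cube0 n r).indicator fun _ => a) = a * ENNReal.ofReal (2 * r) ^ sumInv p
  | 0, p, _, a => by
    simp [mixedNorm, sumInv]
    exact fun h => absurd (mem_cube0.2 fun i => i.elim0) h
  | (n + 1), p, hp, a => by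
    set P := (p (Fin.last n)).toReal with hP
    have hP0 : 0 < P := by linarith [one_lt_toReal (hp (Fin.last n))]
    have h0 : ENNReal.ofReal (2 * r) ≠ 0 := by simpa using hr
    have h1 : ENNReal.ofReal (2 * r) ≠ ∞ := ENNReal.ofReal_ne_top
    have hslice : ∀ t : ℝ, (fun x : Fin n → ℝ =>
        (cube0 (n + 1) r).indicator (fun _ => a) (Fin.snoc x t)) =
        (cube0 n r).indicator fun _ => (Icc (-r) r).indicator (fun _ => a) t := fun t => by
      funext x
      have : (Fin.snoc x t : Fin (n + 1) → ℝ) ∈ cube0 (n + 1) r ↔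
          x ∈ cube0 n r ∧ t ∈ Icc (-r) r := by
        simp only [mem_cube0, Fin.forall_fin_succ', Fin.snoc_castSucc, Fin.snoc_last,
          abs_le, mem_Icc]
      by_cases hx : x ∈ cube0 n r <;> by_cases ht : t ∈ Icc (-r) r <;>
        simp only [indicator, this, hx, ht, and_true, and_false, if_true, if_false]
    simp only [mixedNorm, lpNormE, if_neg (hp (Fin.last n)).2.ne, hslice]
    simp only [mixedNorm_cube0 hr n _ fun i => hp (Fin.castSucc i)]
    set B := ENNReal.ofReal (2 * r) ^ sumInv (fun i => p (Fin.castSucc i)) with hB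
    have h2 : ∀ t : ℝ, ((Icc (-r) r).indicator (fun _ => a) t * B) ^ P =
        (Icc (-r) r).indicator (fun _ => (a * B) ^ P) t := fun t => by
      by_cases ht : t ∈ Icc (-r) r
      · simp [indicator_of_mem ht]
      · simp [indicator_of_notMem ht, hP0]
    have hs : sumInv p = sumInv (fun i => p (Fin.castSucc i)) + 1 / P := by
      simp [sumInv, Fin.sum_univ_castSucc, hP]
    rw [← hP]
    simp only [h2]
    rw [lintegral_indicator measurableSet_Icc, setLIntegral_const, Real.volume_Icc,
      show r - -r = 2 * r by ring, ENNReal.mul_rpow_of_nonneg _ _ (by positivity),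
      ← ENNReal.rpow_mul, mul_one_div_cancel hP0.ne', ENNReal.rpow_one, mul_assoc, hB,
      ← ENNReal.rpow_add _ _ h0 h1, hs]

lemma vnorm_const {v : ℝ} (hv : 1 < v) (n : ℕ) (p : Fin n → ℝ≥0∞)
    (hp : ∀ i, 1 < p i ∧ p i < ∞) (a : ℕ → ℝ≥0∞) {r : ℝ} (hr : 0 < r) :
    vnorm v n p (fun q => (cube0 n r).indicator (fun _ => a q.1) q.2) =
      (∑' j, a j ^ v) ^ (1 / v) * ENNReal.ofReal (2 * r) ^ sumInv p := by
  rw [← mixedNorm_cube0 hr n p hp]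
  exact (mixedNormOn_eq hv n p hp (fun q => a q.1) (cube0 n r)).symm

lemma le_maximalE {n : ℕ} (g : (Fin n → ℝ) → ℝ≥0∞) {c x : Fin n → ℝ} {r : ℝ} (hr : 0 < r)
    (hx : x ∈ cubeAt c r) :
    (volume (cubeAt c r))⁻¹ * ∫⁻ y in cubeAt c r, g y ≤ maximalE g x :=
  le_iSup_of_le c (le_iSup_of_le r (le_iSup_of_le hr (le_iSup_of_le hx le_rfl)))

/-- A large cube that meets `Q(0, r)` is comparable with a dyadic dilate of `Q(0, r)`, and a small
one lies in `Q(0, 2r)`. -/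
lemma maximalE_le_local {n : ℕ} (g : (Fin n → ℝ) → ℝ≥0∞)
    {r : ℝ} (hr : 0 < r) {x : Fin n → ℝ} (hx : x ∈ cube0 n r) :
    maximalE g x ≤ maximalE ((cube0 n (2 * r)).indicator g) x +
      8 ^ n * ∑' k : ℕ, cubeAvg g (2 ^ (k + 1) * r) := by
  refine iSup_le fun c => iSup_le fun s => iSup_le fun hs => iSup_le fun hxc => ?_
  have hsub : ∀ R, r + 2 * s ≤ R → cubeAt c s ⊆ cube0 n R := fun R hR y hy =>
    mem_cube0.2 fun i => by
      have h1 := abs_le.1 (hxc i)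
      have h2 := abs_le.1 (hy i)
      have h3 := abs_le.1 (mem_cube0.1 hx i)
      exact abs_le.2 ⟨by linarith, by linarith⟩
  -- a cube of half-side `s` meeting `Q(0, r)` lies in `Q(0, r + 2 * s)`
  rcases le_or_gt s (r / 2) with h | h
  · refine le_add_right (le_trans (le_of_eq ?_) (le_maximalE _ hs hxc))
    congr 1
    refine setLIntegral_congr_fun (measurableSet_cubeAt c s) fun y hy => ?_
    exact (indicator_of_mem (hsub _ (by linarith) hy) g).symm
  · have hex : ∃ k : ℕ, r + 2 * s ≤ 2 ^ (k + 1) * r := by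
      obtain ⟨k, hk⟩ := pow_unbounded_of_one_lt ((r + 2 * s) / r) (one_lt_two (α := ℝ))
      refine ⟨k, ?_⟩
      rw [div_lt_iff₀ hr] at hk
      have : (2 : ℝ) ^ k * r ≤ 2 ^ (k + 1) * r := by
        gcongr
        · norm_num
        · omega
      linarith
    classical
    set k := Nat.find hex with hk
    have hk1 : r + 2 * s ≤ 2 ^ (k + 1) * r := Nat.find_spec hex
    have hk2 : 2 ^ (k + 1) * r ≤ 8 * s := by
      rcases Nat.eq_zero_or_pos k with h0 | h0
      · rw [h0, zero_add, pow_one]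
        linarith
      · have := Nat.find_min hex (m := k - 1) (by omega)
        rw [Nat.sub_add_cancel h0, not_le] at this
        rw [pow_succ]
        linarith
    set R := 2 ^ (k + 1) * r with hR
    have hR0 : 0 < R := by positivity
    refine le_add_left ((?_ : _ ≤ 8 ^ n * cubeAvg g R).trans
      (mul_le_mul_right (ENNReal.le_tsum (f := fun k : ℕ => cubeAvg g (2 ^ (k + 1) * r)) k) _))
    have h8 : (volume (cubeAt c s))⁻¹ ≤ 8 ^ n * (volume (cube0 n R))⁻¹ := by
      have e : ((8 : ℝ≥0∞) ^ n)⁻¹ * volume (cube0 n R) ≤ volume (cubeAt c s) := by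
        rw [cube0, volume_cubeAt, volume_cubeAt, ENNReal.inv_pow, ← mul_pow]
        refine pow_le_pow_left₀ zero_le ?_ n
        calc (8 : ℝ≥0∞)⁻¹ * ENNReal.ofReal (2 * R) ≤ 8⁻¹ * ENNReal.ofReal (8 * (2 * s)) := by
              refine mul_le_mul_right (ENNReal.ofReal_le_ofReal ?_) _; linarith
          _ = ENNReal.ofReal (2 * s) := by
              rw [ENNReal.ofReal_mul (by norm_num), ← mul_assoc]
              rw [show ENNReal.ofReal 8 = 8 by simp, ENNReal.inv_mul_cancel (by simp) (by simp),
                one_mul]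
      refine (ENNReal.inv_le_inv.2 e).trans (le_of_eq ?_)
      rw [ENNReal.mul_inv (Or.inl (by simp)) (Or.inl (by simp)), inv_inv]
    calc _ ≤ 8 ^ n * (volume (cube0 n R))⁻¹ * ∫⁻ y in cube0 n R, g y :=
          mul_le_mul' h8 (lintegral_mono_set (hsub R hk1))
      _ = _ := by rw [cubeAvg, mul_assoc]

/-- The local estimate: the norm of `M f` on `Q(0, r)` is controlled by the norms of `f` on the dilates
`Q(0, 2 ^ (k + 1) * r)` with weights `2 ^ (-k σ)`, where `σ = 1/p_1 + ⋯ + 1/p_n`. Since `LatNorm` is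
subadditive only on measurable functions, the maximal operator is majorised by the measurable `iterMax`. -/
lemma vnorm_local {v : ℝ} (hv : 1 < v) (n : ℕ) (p : Fin n → ℝ≥0∞)
    (hp : ∀ i, 1 < p i ∧ p i < ∞) : ∃ C : ℝ≥0, ∀ f : ℕ × (Fin n → ℝ) → ℝ≥0∞, Measurable f →
      ∀ r : ℝ, 0 < r →
        vnorm v n p (fun q => (cube0 n r).indicator (maximalE fun x => f (q.1, x)) q.2) ≤
          C * ∑' k : ℕ, ENNReal.ofReal (2 ^ (-(k * sumInv p))) *
            vnorm v n p (fun q => (cube0 n (2 ^ (k + 1) * r)).indicator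
              (fun x => f (q.1, x)) q.2) := by
  obtain ⟨D, hD⟩ := vnorm_iterMax_le hv n p hp
  have hρ := (vnorm_spec hv n p hp).1
  set ρ := vnorm v n p with hρd
  set σ := sumInv p with hσ
  have hσ0 : 0 ≤ σ := Finset.sum_nonneg fun i _ => ENNReal.toReal_nonneg
  refine ⟨6 ^ n * D + 8 ^ n * (6 ^ n * D), fun f hf r hr => ?_⟩
  set N : ℝ → ℝ≥0∞ := fun R => ρ fun q => (cube0 n R).indicator (fun x => f (q.1, x)) q.2 with hN
  have hcut : ∀ R, Measurable fun q : ℕ × (Fin n → ℝ) =>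
      (cube0 n R).indicator (fun x => f (q.1, x)) q.2 := fun R => by
    have := hf.indicator (measurable_snd (measurableSet_cube0 n R))
    exact this
  have hcut' : ∀ R j, Measurable ((cube0 n R).indicator fun x => f (j, x)) := fun R j =>
    (hf.comp measurable_prodMk_left).indicator (measurableSet_cube0 n R)
  set T : ℝ → ℕ × (Fin n → ℝ) → ℝ≥0∞ := fun R q =>
    6 ^ n * iterMax n ((cube0 n R).indicator fun x => f (q.1, x)) q.2 with hT
  have hTm0 : ∀ R, Measurable fun q : ℕ × (Fin n → ℝ) =>
      iterMax n ((cube0 n R).indicator fun x => f (q.1, x)) q.2 := fun R =>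
    measurable_iterMax n (g := fun j => (cube0 n R).indicator fun x => f (j, x)) (hcut R)
  have hTm : ∀ R, Measurable (T R) := fun R => (hTm0 R).const_mul _
  have hMT : ∀ R q, maximalE ((cube0 n R).indicator fun x => f (q.1, x)) q.2 ≤ T R q :=
    fun R q => maximalE_le_iterMax (hcut' R q.1) q.2
  have hTN : ∀ R, ρ (T R) ≤ 6 ^ n * D * N R := fun R => by
    rw [mul_assoc]
    exact (hρ.smul_le _ _ (hTm0 R)).trans (mul_le_mul_right (hD _ (hcut R)) _)
  set a : ℝ → ℕ → ℝ≥0∞ := fun R j => cubeAvg (fun x => f (j, x)) R with ha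
  have ham : ∀ R s, Measurable fun q : ℕ × (Fin n → ℝ) =>
      (cube0 n s).indicator (fun _ => a R q.1) q.2 := fun R s => by
    have := ((measurable_from_nat : Measurable (a R)).comp (measurable_fst (β := Fin n → ℝ))).indicator
      (measurable_snd (measurableSet_cube0 n s))
    exact this
  -- the mean over `Q(0, R)` is a lower bound for the maximal function on `Q(0, R)`
  have haT : ∀ R, 0 < R → ρ (fun q => (cube0 n R).indicator (fun _ => a R q.1) q.2) ≤
      6 ^ n * D * N R := fun R hR => by
    refine (hρ.mono _ _ fun q => ?_).trans (hTN R)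
    by_cases hq : q.2 ∈ cube0 n R
    · rw [indicator_of_mem hq]
      refine le_trans (le_of_eq ?_) ((le_maximalE _ hR hq).trans (hMT R q))
      simp only [ha, cubeAvg]
      congr 1
      refine setLIntegral_congr_fun (measurableSet_cube0 n R) fun y hy => ?_
      exact (indicator_of_mem hy (fun x => f (q.1, x))).symm
    · rw [indicator_of_notMem hq]; exact zero_le
  -- the norms of one constant on `Q(0, r)` and on `Q(0, R)` differ by the factor `(r / R) ^ σ`
  have hscale : ∀ k : ℕ, ρ (fun q => (cube0 n r).indicator
      (fun _ => a (2 ^ (k + 1) * r) q.1) q.2) ≤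
      6 ^ n * D * (ENNReal.ofReal (2 ^ (-(k * σ))) * N (2 ^ (k + 1) * r)) := fun k => by
    set R := 2 ^ (k + 1) * r with hR
    have hR0 : 0 < R := by positivity
    have h1 : ENNReal.ofReal (2 * r) ^ σ ≤
        ENNReal.ofReal (2 ^ (-(k * σ))) * ENNReal.ofReal (2 * R) ^ σ := by
      rw [ENNReal.ofReal_rpow_of_pos (by positivity), ENNReal.ofReal_rpow_of_pos (by positivity),
        ← ENNReal.ofReal_mul (by positivity)]
      refine ENNReal.ofReal_le_ofReal ?_
      have : (2 : ℝ) ^ (-(k * σ)) = ((2 : ℝ) ^ k)⁻¹ ^ σ := by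
        rw [← Real.rpow_natCast, ← Real.rpow_neg (by norm_num), ← Real.rpow_mul (by norm_num)]
        congr 1; ring
      rw [this, ← Real.mul_rpow (by positivity) (by positivity)]
      refine Real.rpow_le_rpow (by positivity) ?_ hσ0
      rw [hR, pow_succ]
      have h2 : (2 : ℝ) ^ k ≠ 0 := by positivity
      field_simp
      linarith
    have h2 := haT R hR0
    rw [hρd, vnorm_const hv n p hp _ hR0] at h2
    rw [hρd, vnorm_const hv n p hp _ hr]
    calc _ ≤ (∑' j, a R j ^ v) ^ (1 / v) *
          (ENNReal.ofReal (2 ^ (-(k * σ))) * ENNReal.ofReal (2 * R) ^ σ) :=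
          mul_le_mul_right h1 _
      _ = ENNReal.ofReal (2 ^ (-(k * σ))) *
          ((∑' j, a R j ^ v) ^ (1 / v) * ENNReal.ofReal (2 * R) ^ σ) := by ring
      _ ≤ ENNReal.ofReal (2 ^ (-(k * σ))) * (6 ^ n * D * N R) := mul_le_mul_right h2 _
      _ = _ := by ring
  set S := ∑' k : ℕ, ENNReal.ofReal (2 ^ (-(k * σ))) * N (2 ^ (k + 1) * r) with hS
  have hS0 : N (2 * r) ≤ S := by
    refine le_trans (le_of_eq ?_) (ENNReal.le_tsum 0)
    simp
  set U : ℕ × (Fin n → ℝ) → ℝ≥0∞ := fun q => ∑' k : ℕ,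
    (cube0 n r).indicator (fun _ => a (2 ^ (k + 1) * r) q.1) q.2 with hU
  have hUm : Measurable U := Measurable.tsum fun k => ham _ _
  calc ρ (fun q => (cube0 n r).indicator (maximalE fun x => f (q.1, x)) q.2)
      ≤ ρ (fun q => T (2 * r) q + 8 ^ n * U q) := by
        refine hρ.mono _ _ fun q => ?_
        by_cases hq : q.2 ∈ cube0 n r
        · simp only [hU, indicator_of_mem hq]
          exact (maximalE_le_local _ hr hq).trans (add_le_add_left (hMT _ q) _)
        · rw [indicator_of_notMem hq]; exact zero_le
    _ ≤ ρ (T (2 * r)) + 8 ^ n * ρ U :=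
        (hρ.add_le _ _ (hTm _) (hUm.const_mul _)).trans
          (add_le_add_right (hρ.smul_le _ _ hUm) _)
    _ ≤ 6 ^ n * D * S + 8 ^ n * (6 ^ n * D * S) := by
        refine add_le_add ((hTN _).trans (mul_le_mul_right hS0 _)) (mul_le_mul_right ?_ _)
        refine (hρ.tsum_le _ fun k => ham _ _).trans ?_
        rw [hS, ← ENNReal.tsum_mul_left]
        exact ENNReal.tsum_le_tsum hscale
    _ = _ := by push_cast; ring

end

/-! ### The Morrey scale -/

section

/-- The measure `dr/r` on `(0, ∞)` is invariant under dilations. -/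
lemma lintegral_dilate {G : ℝ → ℝ≥0∞} (hG : Measurable G) {c : ℝ} (hc : 0 < c) :
    ∫⁻ r in Ioi (0 : ℝ), G (c * r) * ENNReal.ofReal r⁻¹ =
      ∫⁻ r in Ioi (0 : ℝ), G r * ENNReal.ofReal r⁻¹ := by
  set H : ℝ → ℝ≥0∞ := (Ioi (0 : ℝ)).indicator fun r => G r * ENNReal.ofReal r⁻¹ with hH
  have hHm : Measurable H :=
    (hG.mul (measurable_id.inv.ennreal_ofReal)).indicator measurableSet_Ioi
  have h1 : ∫⁻ r, H (c * r) = ENNReal.ofReal c⁻¹ * ∫⁻ r, H r := by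
    rw [← lintegral_map (f := H) (g := fun r => c * r) hHm (measurable_const_mul c),
      Real.map_volume_mul_left hc.ne', lintegral_smul_measure, abs_of_pos (inv_pos.2 hc),
      smul_eq_mul]
  have h2 : ∀ r, (Ioi (0 : ℝ)).indicator (fun r => G (c * r) * ENNReal.ofReal r⁻¹) r =
      ENNReal.ofReal c * H (c * r) := fun r => by
    by_cases hr : 0 < r
    · rw [indicator_of_mem (mem_Ioi.2 hr), hH, indicator_of_mem (mem_Ioi.2 (mul_pos hc hr)),
        mul_left_comm, ← ENNReal.ofReal_mul hc.le, mul_inv, mul_inv_cancel_left₀ hc.ne']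
    · rw [indicator_of_notMem (by simpa using hr), hH, indicator_of_notMem, mul_zero]
      rw [mem_Ioi, mul_pos_iff_of_pos_left hc]; exact hr
  rw [← lintegral_indicator measurableSet_Ioi, ← lintegral_indicator measurableSet_Ioi]
  simp only [h2]
  have hHc : Measurable fun r => H (c * r) := hHm.comp (measurable_const_mul c)
  rw [lintegral_const_mul _ hHc, h1, ← mul_assoc,
    ← ENNReal.ofReal_mul hc.le, mul_inv_cancel₀ hc.ne', ENNReal.ofReal_one, one_mul]

lemma ae_dilate {P : ℝ → Prop} (h : ∀ᵐ r ∂(volume.restrict (Ioi (0 : ℝ))), P r) {c : ℝ}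
    (hc : 0 < c) : ∀ᵐ r ∂(volume.restrict (Ioi (0 : ℝ))), P (c * r) := by
  rw [ae_restrict_iff' measurableSet_Ioi] at h ⊢
  have hq : Measure.QuasiMeasurePreserving (fun r : ℝ => c * r) volume volume :=
    ⟨measurable_const_mul c, by
      rw [Real.map_volume_mul_left hc.ne']
      exact Measure.smul_absolutelyContinuous⟩
  filter_upwards [hq.ae h] with r hr h0
  exact hr (mul_pos hc h0)

lemma tsum_geom_ne_top {δ : ℝ} (hδ : 0 < δ) :
    ∑' k : ℕ, ENNReal.ofReal (2 ^ (-(k * δ))) ≠ ∞ := by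
  have h : ∀ k : ℕ, ENNReal.ofReal (2 ^ (-(k * δ))) = ENNReal.ofReal (2 ^ (-δ)) ^ k := fun k => by
    rw [← ENNReal.ofReal_pow (by positivity), ← Real.rpow_natCast, ← Real.rpow_mul (by norm_num)]
    congr 2; ring
  simp only [h]
  rw [ENNReal.tsum_geometric, Ne, ENNReal.inv_eq_top, tsub_eq_zero_iff_le, not_le,
    ENNReal.ofReal_lt_one]
  exact Real.rpow_lt_one_of_one_lt_of_neg (by norm_num) (by linarith)

/-- A geometrically weighted sum is controlled by a geometrically weighted `ℓ^q` sum for every `q > 0`.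
Half of the decay is spent on replacing the sum by a supremum, so `q < 1` needs no separate treatment. -/
lemma tsum_geom_rpow_le {δ q : ℝ} (hq : 0 < q) (b : ℕ → ℝ≥0∞) :
    (∑' k : ℕ, ENNReal.ofReal (2 ^ (-(k * δ))) * b k) ^ q ≤
      (∑' k : ℕ, ENNReal.ofReal (2 ^ (-(k * (δ / 2))))) ^ q *
        ∑' k : ℕ, ENNReal.ofReal (2 ^ (-(k * (δ / 2 * q)))) * b k ^ q := by
  have h1 : ∀ k : ℕ, ENNReal.ofReal (2 ^ (-(k * δ))) =
      ENNReal.ofReal (2 ^ (-(k * (δ / 2)))) * ENNReal.ofReal (2 ^ (-(k * (δ / 2)))) := fun k => by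
    rw [← ENNReal.ofReal_mul (by positivity), ← Real.rpow_add (by norm_num)]
    congr 2; ring
  have h2 : ∀ k : ℕ, ENNReal.ofReal (2 ^ (-(k * (δ / 2 * q)))) =
      ENNReal.ofReal (2 ^ (-(k * (δ / 2)))) ^ q := fun k => by
    rw [ENNReal.ofReal_rpow_of_pos (by positivity), ← Real.rpow_mul (by norm_num)]
    congr 2; ring
  set s : ℕ → ℝ≥0∞ := fun k => ENNReal.ofReal (2 ^ (-(k * (δ / 2)))) with hs
  calc _ ≤ ((∑' k, s k) * ⨆ k, s k * b k) ^ q := by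
        refine ENNReal.rpow_le_rpow ?_ hq.le
        rw [← ENNReal.tsum_mul_right]
        refine ENNReal.tsum_le_tsum fun k => ?_
        rw [h1, mul_assoc]
        exact mul_le_mul_right (le_iSup (fun k => s k * b k) k) _
    _ = (∑' k, s k) ^ q * ⨆ k, (s k * b k) ^ q := by
        rw [ENNReal.mul_rpow_of_nonneg _ _ hq.le, rpow_iSup _ hq]
    _ ≤ _ := by
        refine mul_le_mul_right (iSup_le fun k => ?_) _
        rw [ENNReal.mul_rpow_of_nonneg _ _ hq.le, ← h2]
        exact ENNReal.le_tsum (f := fun k : ℕ => ENNReal.ofReal (2 ^ (-(k * (δ / 2 * q)))) * b k ^ q) k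

/-- A dyadic Hardy-type inequality for the scale `L^q(dr/r)`. The weight `r ^ (-lam)` turns the factors
`2 ^ (-k σ)` into `2 ^ (-k (σ - lam))`, which still decay; `dr/r` does not see the dilations. Only `N`
need be measurable. -/
lemma morreyScale_le {q : ℝ≥0∞} (hq : 0 < q) {lam σ : ℝ} (hσ : lam < σ) (D : ℝ≥0) :
    ∃ C : ℝ≥0, ∀ A N : ℝ → ℝ≥0∞, Measurable N →
      (∀ r, 0 < r → A r ≤ D * ∑' k : ℕ, ENNReal.ofReal (2 ^ (-(k * σ))) * N (2 ^ (k + 1) * r)) →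
      morreyScale q lam A ≤ C * morreyScale q lam N := by
  set δ := σ - lam with hδ
  have hδ0 : 0 < δ := by linarith
  set K : ℝ≥0∞ := D * ENNReal.ofReal (2 ^ lam) with hK
  have hKt : K ≠ ∞ := ENNReal.mul_ne_top ENNReal.coe_ne_top ENNReal.ofReal_ne_top
  have key : ∀ A N : ℝ → ℝ≥0∞,
      (∀ r, 0 < r → A r ≤ D * ∑' k : ℕ, ENNReal.ofReal (2 ^ (-(k * σ))) * N (2 ^ (k + 1) * r)) →
      ∀ r, 0 < r → ENNReal.ofReal (r ^ (-lam)) * A r ≤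
        K * ∑' k : ℕ, ENNReal.ofReal (2 ^ (-(k * δ))) *
          (ENNReal.ofReal ((2 ^ (k + 1) * r) ^ (-lam)) * N (2 ^ (k + 1) * r)) := by
    intro A N h r hr
    refine (mul_le_mul_right (h r hr) _).trans (le_of_eq ?_)
    rw [hK, mul_left_comm, mul_assoc]
    congr 1
    rw [← ENNReal.tsum_mul_left, ← ENNReal.tsum_mul_left]
    refine tsum_congr fun k => ?_
    rw [← mul_assoc, ← mul_assoc, ← mul_assoc]
    congr 1
    rw [← ENNReal.ofReal_mul (by positivity), ← ENNReal.ofReal_mul (by positivity),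
      ← ENNReal.ofReal_mul (by positivity)]
    congr 1
    rw [Real.mul_rpow (by positivity) hr.le, ← Real.rpow_natCast 2 (k + 1),
      ← Real.rpow_mul (by norm_num), ← mul_assoc, ← Real.rpow_add (by norm_num),
      ← Real.rpow_add (by norm_num), mul_comm]
    congr 2
    push_cast
    ring
  by_cases hqt : q = ∞
  · refine ⟨(K * ∑' k : ℕ, ENNReal.ofReal (2 ^ (-(k * δ)))).toNNReal, fun A N hN h => ?_⟩
    rw [ENNReal.coe_toNNReal (ENNReal.mul_ne_top hKt (tsum_geom_ne_top hδ0))]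
    simp only [morreyScale, if_pos hqt]
    set E := essSup (fun r => ENNReal.ofReal (r ^ (-lam)) * N r)
      (volume.restrict (Ioi (0 : ℝ))) with hE
    have hae : ∀ᵐ r ∂(volume.restrict (Ioi (0 : ℝ))), ENNReal.ofReal (r ^ (-lam)) * N r ≤ E :=
      ENNReal.ae_le_essSup _
    have hall : ∀ᵐ r ∂(volume.restrict (Ioi (0 : ℝ))), ∀ k : ℕ,
        ENNReal.ofReal ((2 ^ (k + 1) * r) ^ (-lam)) * N (2 ^ (k + 1) * r) ≤ E :=
      ae_all_iff.2 fun k => ae_dilate hae (by positivity)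
    refine essSup_le_of_ae_le _ ?_
    filter_upwards [hall, ae_restrict_mem measurableSet_Ioi] with r hr hr0
    refine (key A N h r hr0).trans ?_
    rw [mul_assoc K, ← ENNReal.tsum_mul_right]
    exact mul_le_mul_right (ENNReal.tsum_le_tsum fun k => mul_le_mul_right (hr k) _) _
  · set t := q.toReal with ht
    have ht0 : 0 < t := ENNReal.toReal_pos hq.ne' hqt
    set S := ∑' k : ℕ, ENNReal.ofReal (2 ^ (-(k * (δ / 2)))) with hS
    set S' := ∑' k : ℕ, ENNReal.ofReal (2 ^ (-(k * (δ / 2 * t)))) with hS'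
    have hSt : S ≠ ∞ := tsum_geom_ne_top (by linarith)
    have hSt' : S' ≠ ∞ := tsum_geom_ne_top (by positivity)
    set L : ℝ≥0∞ := K ^ t * S ^ t * S' with hL
    have hLt : L ^ (1 / t) ≠ ∞ := by
      refine ENNReal.rpow_ne_top_of_nonneg (by positivity) ?_
      exact ENNReal.mul_ne_top (ENNReal.mul_ne_top (ENNReal.rpow_ne_top_of_nonneg ht0.le hKt)
        (ENNReal.rpow_ne_top_of_nonneg ht0.le hSt)) hSt'
    refine ⟨(L ^ (1 / t)).toNNReal, fun A N hN h => ?_⟩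
    rw [ENNReal.coe_toNNReal hLt]
    simp only [morreyScale, if_neg hqt, ← ht]
    rw [← ENNReal.mul_rpow_of_nonneg _ _ (by positivity)]
    refine ENNReal.rpow_le_rpow ?_ (by positivity)
    set G : ℝ → ℝ≥0∞ := fun r => (ENNReal.ofReal (r ^ (-lam)) * N r) ^ t with hG
    have hGm : Measurable G :=
      (((measurable_id.pow_const (-lam)).ennreal_ofReal).mul hN).pow_const t
    have hinv : Measurable fun r : ℝ => ENNReal.ofReal r⁻¹ := measurable_id.inv.ennreal_ofReal
    have hterm0 : ∀ k : ℕ, Measurable fun r : ℝ =>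
        G (2 ^ (k + 1) * r) * ENNReal.ofReal r⁻¹ := fun k =>
      (hGm.comp (measurable_const_mul _)).mul hinv
    have hterm : ∀ k : ℕ, Measurable fun r : ℝ => ENNReal.ofReal (2 ^ (-(k * (δ / 2 * t)))) *
        (G (2 ^ (k + 1) * r) * ENNReal.ofReal r⁻¹) := fun k =>
      (hterm0 k).const_mul _
    calc ∫⁻ r in Ioi (0 : ℝ), (ENNReal.ofReal (r ^ (-lam)) * A r) ^ t * ENNReal.ofReal r⁻¹
        ≤ ∫⁻ r in Ioi (0 : ℝ), K ^ t * S ^ t *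
            ∑' k : ℕ, ENNReal.ofReal (2 ^ (-(k * (δ / 2 * t)))) *
              (G (2 ^ (k + 1) * r) * ENNReal.ofReal r⁻¹) := by
          refine setLIntegral_mono' measurableSet_Ioi fun r hr => ?_
          calc _ ≤ (K * ∑' k : ℕ, ENNReal.ofReal (2 ^ (-(k * δ))) *
                (ENNReal.ofReal ((2 ^ (k + 1) * r) ^ (-lam)) * N (2 ^ (k + 1) * r))) ^ t *
                ENNReal.ofReal r⁻¹ := by
                exact mul_le_mul_left (ENNReal.rpow_le_rpow (key A N h r hr) ht0.le) _
            _ ≤ K ^ t * (S ^ t * ∑' k : ℕ, ENNReal.ofReal (2 ^ (-(k * (δ / 2 * t)))) *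
                G (2 ^ (k + 1) * r)) * ENNReal.ofReal r⁻¹ := by
                rw [ENNReal.mul_rpow_of_nonneg _ _ ht0.le]
                gcongr
                exact tsum_geom_rpow_le ht0 _
            _ = _ := by
                rw [← mul_assoc, mul_assoc _ _ (ENNReal.ofReal r⁻¹), ← ENNReal.tsum_mul_right]
                simp only [mul_assoc]
      _ = K ^ t * S ^ t * ∑' k : ℕ, ENNReal.ofReal (2 ^ (-(k * (δ / 2 * t)))) *
            ∫⁻ r in Ioi (0 : ℝ), G r * ENNReal.ofReal r⁻¹ := by
          rw [lintegral_const_mul _ (Measurable.tsum hterm),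
            lintegral_tsum fun k => (hterm k).aemeasurable]
          congr 1
          refine tsum_congr fun k => ?_
          rw [lintegral_const_mul _ (hterm0 k),
            lintegral_dilate hGm (by positivity)]
      _ = L * ∫⁻ r in Ioi (0 : ℝ), G r * ENNReal.ofReal r⁻¹ := by
          rw [ENNReal.tsum_mul_right, hL, mul_assoc (K ^ t * S ^ t)]

end

end LMM

/-- vector-valued maximal inequality on local mixed Morrey spaces
`LM^λ_{p,q}`. -/
theorem statement5 (n : ℕ) (p : Fin n → ℝ≥0∞) (q : ℝ≥0∞) (v lam : ℝ)
    (hp : ∀ i, 1 < p i ∧ p i < ∞) (hq : 0 < q) (hv : 1 < v)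
    (hlam0 : 0 ≤ lam) (hlam : lam < sumInv p) :
    ∃ C : ℝ≥0, ∀ F : ℕ → (Fin n → ℝ) → ℝ, (∀ j, Measurable (F j)) →
      LMlamQ n p q lam (fun x => (∑' j, maximal (F j) x ^ v) ^ (1 / v)) ≤
        C * LMlamQ n p q lam (fun x => (∑' j, ((‖F j x‖₊ : ℝ≥0∞)) ^ v) ^ (1 / v)) := by
  obtain ⟨D, hD⟩ := vnorm_local hv n p hp
  obtain ⟨C, hC⟩ := morreyScale_le hq hlam D
  refine ⟨C, fun F hF => ?_⟩
  set f : ℕ × (Fin n → ℝ) → ℝ≥0∞ := fun z => (‖F z.1 z.2‖₊ : ℝ≥0∞) with hf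
  have hfm : Measurable f :=
    measurable_from_prod_countable_right fun j => (hF j).nnnorm.coe_nnreal_ennreal
  have e1 : ∀ S, mixedNormOn n p (fun x => (∑' j, (‖F j x‖₊ : ℝ≥0∞) ^ v) ^ (1 / v)) S =
      vnorm v n p (fun z => S.indicator (fun x => f (z.1, x)) z.2) := mixedNormOn_eq hv n p hp f
  have e2 : ∀ S, mixedNormOn n p (fun x => (∑' j, maximal (F j) x ^ v) ^ (1 / v)) S =
      vnorm v n p (fun z => S.indicator (maximalE fun x => f (z.1, x)) z.2) :=
    mixedNormOn_eq hv n p hp fun z => maximal (F z.1) z.2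
  -- the norm of `f` on `Q(0, r)` is measurable in `r` because it is monotone
  refine hC _ _ ?_ fun r hr => ?_
  · refine Monotone.measurable fun r s hrs => ?_
    rw [e1, e1]
    exact (vnorm_spec hv n p hp).1.mono _ _ fun z =>
      indicator_le_indicator_of_subset (cube0_mono hrs) (fun _ => zero_le) z.2
  · simp only [e1, e2]
    exact hD f hfm r hr
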